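/- arXiv:1511.04066 — 3 statements merged into one kernel-verified Lean document; each statement's English description precedes it below -/
import Mathlib

section
/- For every ε ∈ (0,1/2) there exist a positive integer N ≤ C·ε⁻²·(log(1/ε))² (for a universal constant C ≥ 1) and, for every positive integer n, a function A from length-N sequences of elements of {0,1,…,n} to parameter vectors in [0,1]ⁿ, such that for every n-PBD P, the probability under the N-fold product of P (i.e., over N i.i.d. samples drawn from P) that the n-PBD with parameter vector A(samples) is within total variation distance ε of P is at least 9/10. -/
/-!
The learner outputs any Poisson binomial distribution (PBD) that is *compatible* with the samples.
The true distribution is compatible with probability at least `9/10` (`compatible_prob`), and two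
PBDs compatible with the same samples are `ε`-close (`close_of_compatible`), so the output is good.

Let `V` be one plus the variance of a PBD `P`, and let `ℓ = log (1/ε)`. Two facts about PBDs are
used. Exponential moments at scale `√V` are bounded (`pbd_exp_moment`), so that all but a small
fraction of the mass lies in a window of length `O(√V ℓ)` (`pbd_tail`). The characteristic
function satisfies `|φ_P(ξ)|² ≤ 27 exp (-V ξ² / 4)` for `|ξ| ≤ π` (`pbdChar_decay`), so that it is
negligible for `|ξ| ≥ Cℓ / √V`.

The empirical characteristic function `φ_x` of `N` samples has mean squared error at most `1/N` at
each frequency (`empChar_variance`). Hence the integral of `|φ_P - φ_x|²` over the low frequencies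
is typically `O(ℓ / (N √V))`; this is the main part of compatibility. If `P` and `Q` are both
compatible with `x`, Parseval's identity gives `‖P - Q‖₂² = O(ℓ / (N √V))` up to a negligible
high-frequency term (`l2_bound`), and Cauchy–Schwarz on the window gives
`dTV(P, Q)² = O(ℓ² / N)` up to negligible terms, hence `N = O(ε⁻² ℓ²)` samples suffice.

The comparison needs the scales of `P` and `Q` to agree up to a constant. To this end compatibility
also asks that the empirical second moment about the mean be `O(V)` and that `φ_x` be close to
`φ_P` at the single frequency `6 / √V` (`scale_compare`).
-/

open scoped Classical

/-- The pmf of the Poisson binomial distribution with parameter vector `p`. -/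
noncomputable def pbdPmf {ι : Type*} [Fintype ι] [DecidableEq ι] (p : ι → ℝ) (k : ℕ) : ℝ :=
  ∑ S ∈ Finset.univ.powerset.filter (fun S : Finset ι => S.card = k),
    (∏ i ∈ S, p i) * ∏ i ∈ Sᶜ, (1 - p i)

/-- Total variation distance between two distributions on ℕ. -/
noncomputable def dTV (P Q : ℕ → ℝ) : ℝ := (1 / 2) * ∑' k : ℕ, |P k - Q k|


/-! ### Poisson binomial distributions and their generating function -/

lemma pbdPmf_nonneg {n : ℕ} {p : Fin n → ℝ} (hp : ∀ i, p i ∈ Set.Icc (0 : ℝ) 1) (k : ℕ) :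
    0 ≤ pbdPmf p k := by
  unfold pbdPmf
  refine Finset.sum_nonneg fun S _ => mul_nonneg ?_ ?_
  · exact Finset.prod_nonneg fun i _ => (hp i).1
  · exact Finset.prod_nonneg fun i _ => sub_nonneg.2 (hp i).2

lemma pbdPmf_eq_zero {n : ℕ} (p : Fin n → ℝ) {k : ℕ} (hk : n < k) : pbdPmf p k = 0 := by
  unfold pbdPmf
  rw [Finset.filter_false_of_mem, Finset.sum_empty]
  intro S _ h
  have := Finset.card_le_univ S
  rw [Fintype.card_fin] at this
  omega

/-- The probability generating function of a Poisson binomial distribution factors over its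
Bernoulli summands. -/
lemma pbd_genfun {n : ℕ} (p : Fin n → ℝ) (z : ℂ) :
    ∑ k ∈ Finset.range (n + 1), (pbdPmf p k : ℂ) * z ^ k
      = ∏ i, (1 - (p i : ℂ) + p i * z) := by
  have h1 : ∏ i, (1 - (p i : ℂ) + p i * z)
      = ∑ S ∈ (Finset.univ : Finset (Fin n)).powerset,
        ((∏ i ∈ S, (p i : ℂ)) * ∏ i ∈ Sᶜ, (1 - (p i : ℂ))) * z ^ S.card := by
    rw [Finset.prod_congr rfl (fun i _ => add_comm (1 - (p i : ℂ)) (p i * z)), Finset.prod_add]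
    refine Finset.sum_congr rfl fun S _ => ?_
    rw [Finset.prod_mul_distrib, Finset.prod_const, Finset.compl_eq_univ_sdiff]
    ring
  rw [h1, ← Finset.sum_fiberwise_of_maps_to (t := Finset.range (n + 1)) (g := Finset.card)]
  · refine Finset.sum_congr rfl fun k _ => ?_
    unfold pbdPmf
    push_cast
    rw [Finset.sum_mul]
    refine Finset.sum_congr rfl fun S hS => ?_
    rw [(Finset.mem_filter.1 hS).2]
  · intro S _
    have := Finset.card_le_univ S
    rw [Fintype.card_fin] at this
    simp only [Finset.mem_range]
    omega

lemma pbd_genfun_real {n : ℕ} (p : Fin n → ℝ) (z : ℝ) :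
    ∑ k ∈ Finset.range (n + 1), pbdPmf p k * z ^ k = ∏ i, (1 - p i + p i * z) := by
  have := pbd_genfun p (z : ℂ)
  exact_mod_cast this

lemma pbd_sum_one {n : ℕ} (p : Fin n → ℝ) :
    ∑ k ∈ Finset.range (n + 1), pbdPmf p k = 1 := by
  simpa using pbd_genfun_real p 1

/-- The mean `∑ pᵢ` of the Poisson binomial distribution. -/
noncomputable def pbdMean {n : ℕ} (p : Fin n → ℝ) : ℝ := ∑ i, p i

/-- The variance of the Poisson binomial distribution, increased by `1`. The shift keeps the
length scale `√(pbdScale p)` of the distribution at least `1`. -/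
noncomputable def pbdScale {n : ℕ} (p : Fin n → ℝ) : ℝ := 1 + ∑ i, p i * (1 - p i)

lemma one_le_pbdScale {n : ℕ} {p : Fin n → ℝ} (hp : ∀ i, p i ∈ Set.Icc (0 : ℝ) 1) :
    1 ≤ pbdScale p := by
  unfold pbdScale
  have : 0 ≤ ∑ i, p i * (1 - p i) :=
    Finset.sum_nonneg fun i _ => mul_nonneg (hp i).1 (sub_nonneg.2 (hp i).2)
  linarith

/-! ### Exponential moments and tails -/

lemma exp_le_quadratic {y : ℝ} (hy : |y| ≤ 1) : Real.exp y ≤ 1 + y + y ^ 2 := by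
  have := Real.abs_exp_sub_one_sub_id_le hy
  linarith [le_abs_self (Real.exp y - 1 - y)]

lemma bernoulli_mgf {q t : ℝ} (hq : q ∈ Set.Icc (0 : ℝ) 1) (ht : |t| ≤ 1) :
    (1 - q + q * Real.exp t) * Real.exp (-(t * q)) ≤ Real.exp (t ^ 2 * (q * (1 - q))) := by
  obtain ⟨h0, h1⟩ := hq
  have hy1 : |-(t * q)| ≤ 1 := by
    rw [abs_neg, abs_mul, abs_of_nonneg h0]; nlinarith [abs_nonneg t]
  have hy2 : |t * (1 - q)| ≤ 1 := by
    rw [abs_mul, abs_of_nonneg (sub_nonneg.2 h1)]; nlinarith [abs_nonneg t]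
  have e1 := exp_le_quadratic hy1
  have e2 := exp_le_quadratic hy2
  have e3 : Real.exp t * Real.exp (-(t * q)) = Real.exp (t * (1 - q)) := by
    rw [← Real.exp_add]; ring_nf
  have e4 := Real.add_one_le_exp (t ^ 2 * (q * (1 - q)))
  calc (1 - q + q * Real.exp t) * Real.exp (-(t * q))
      = (1 - q) * Real.exp (-(t * q)) + q * Real.exp (t * (1 - q)) := by rw [← e3]; ring
    _ ≤ (1 - q) * (1 + -(t * q) + (-(t * q)) ^ 2)
        + q * (1 + t * (1 - q) + (t * (1 - q)) ^ 2) := by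
        gcongr
    _ = t ^ 2 * (q * (1 - q)) + 1 := by ring
    _ ≤ _ := e4

lemma pbd_mgf {n : ℕ} {p : Fin n → ℝ} (hp : ∀ i, p i ∈ Set.Icc (0 : ℝ) 1) {t : ℝ}
    (ht : |t| ≤ 1) :
    ∑ k ∈ Finset.range (n + 1), pbdPmf p k * Real.exp (t * (k - pbdMean p))
      ≤ Real.exp (t ^ 2 * pbdScale p) := by
  have h1 : ∑ k ∈ Finset.range (n + 1), pbdPmf p k * Real.exp (t * (k - pbdMean p))
      = ∏ i, ((1 - p i + p i * Real.exp t) * Real.exp (-(t * p i))) := by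
    rw [Finset.prod_mul_distrib, ← pbd_genfun_real, ← Real.exp_sum, Finset.sum_mul]
    refine Finset.sum_congr rfl fun k _ => ?_
    rw [mul_assoc, ← Real.exp_nat_mul, ← Real.exp_add, Finset.sum_neg_distrib, ← Finset.mul_sum]
    unfold pbdMean
    ring_nf
  rw [h1]
  calc _ ≤ ∏ i, Real.exp (t ^ 2 * (p i * (1 - p i))) := by
        refine Finset.prod_le_prod (fun i _ => ?_) fun i _ => bernoulli_mgf (hp i) ht
        have := (hp i).1
        have := (hp i).2
        have := Real.exp_pos t
        exact mul_nonneg (by nlinarith) (Real.exp_pos _).le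
    _ = Real.exp (t ^ 2 * ∑ i, p i * (1 - p i)) := by rw [← Real.exp_sum, Finset.mul_sum]
    _ ≤ _ := by
        apply Real.exp_le_exp.2
        unfold pbdScale
        nlinarith [sq_nonneg t]

/-- At the natural scale `√(pbdScale p)` the two-sided exponential moment is bounded. -/
lemma pbd_exp_moment {n : ℕ} {p : Fin n → ℝ} (hp : ∀ i, p i ∈ Set.Icc (0 : ℝ) 1) :
    ∑ k ∈ Finset.range (n + 1),
      pbdPmf p k * Real.exp (|(k : ℝ) - pbdMean p| / √(pbdScale p)) ≤ 6 := by
  have hV := one_le_pbdScale hp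
  set V := pbdScale p with hVdef
  have hs : 1 ≤ √V := by rwa [Real.one_le_sqrt]
  have ht : |(√V)⁻¹| ≤ 1 := by
    rw [abs_of_nonneg (by positivity)]
    exact inv_le_one_of_one_le₀ hs
  have hsq : ((√V)⁻¹) ^ 2 * V = 1 := by
    rw [inv_pow, Real.sq_sqrt (by linarith), inv_mul_cancel₀ (by linarith)]
  have h1 := pbd_mgf hp ht
  have h2 := pbd_mgf hp (t := -(√V)⁻¹) (by rwa [abs_neg])
  rw [← hVdef, hsq] at h1
  rw [← hVdef, neg_sq, hsq] at h2
  have he := Real.exp_one_lt_d9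
  calc _ ≤ ∑ k ∈ Finset.range (n + 1), (pbdPmf p k * Real.exp ((√V)⁻¹ * (k - pbdMean p))
          + pbdPmf p k * Real.exp (-(√V)⁻¹ * (k - pbdMean p))) := by
        refine Finset.sum_le_sum fun k _ => ?_
        rw [← mul_add]
        refine mul_le_mul_of_nonneg_left ?_ (pbdPmf_nonneg hp k)
        have a := Real.exp_pos ((√V)⁻¹ * (k - pbdMean p))
        have b := Real.exp_pos (-(√V)⁻¹ * (k - pbdMean p))
        rcases abs_cases ((k : ℝ) - pbdMean p) with ⟨h, _⟩ | ⟨h, _⟩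
        · rw [h, div_eq_inv_mul]; linarith
        · rw [h, div_eq_inv_mul, mul_neg, ← neg_mul]; linarith
    _ ≤ 6 := by
        rw [Finset.sum_add_distrib]
        linarith

lemma pbd_second_moment {n : ℕ} {p : Fin n → ℝ} (hp : ∀ i, p i ∈ Set.Icc (0 : ℝ) 1) :
    ∑ k ∈ Finset.range (n + 1), pbdPmf p k * ((k : ℝ) - pbdMean p) ^ 2 ≤ 12 * pbdScale p := by
  have hV := one_le_pbdScale hp
  have hs : 0 < √(pbdScale p) := Real.sqrt_pos.2 (by linarith)
  have key : ∀ k : ℕ, ((k : ℝ) - pbdMean p) ^ 2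
      ≤ 2 * pbdScale p * Real.exp (|(k : ℝ) - pbdMean p| / √(pbdScale p)) := by
    intro k
    set y := |(k : ℝ) - pbdMean p| / √(pbdScale p) with hy
    have hy0 : 0 ≤ y := by positivity
    have h := Real.quadratic_le_exp_of_nonneg hy0
    have h2 : ((k : ℝ) - pbdMean p) ^ 2 = pbdScale p * y ^ 2 := by
      rw [hy, div_pow, Real.sq_sqrt (by linarith), sq_abs]
      field_simp
    rw [h2]
    nlinarith
  calc _ ≤ ∑ k ∈ Finset.range (n + 1), 2 * pbdScale p *
          (pbdPmf p k * Real.exp (|(k : ℝ) - pbdMean p| / √(pbdScale p))) := by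
        refine Finset.sum_le_sum fun k _ => ?_
        nlinarith [key k, mul_le_mul_of_nonneg_left (key k) (pbdPmf_nonneg hp k)]
    _ ≤ _ := by
        rw [← Finset.mul_sum]
        nlinarith [pbd_exp_moment hp]

lemma pbd_tail {n : ℕ} {p : Fin n → ℝ} (hp : ∀ i, p i ∈ Set.Icc (0 : ℝ) 1) (T : ℝ) :
    ∑ k ∈ (Finset.range (n + 1)).filter
      (fun k : ℕ => ¬ |(k : ℝ) - pbdMean p| ≤ T * √(pbdScale p)), pbdPmf p k
      ≤ 6 * Real.exp (-T) := by
  have hV := one_le_pbdScale hp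
  have hs : 0 < √(pbdScale p) := Real.sqrt_pos.2 (by linarith)
  calc _ ≤ ∑ k ∈ (Finset.range (n + 1)).filter
          (fun k : ℕ => ¬ |(k : ℝ) - pbdMean p| ≤ T * √(pbdScale p)),
        pbdPmf p k * Real.exp (|(k : ℝ) - pbdMean p| / √(pbdScale p)) * Real.exp (-T) := by
        refine Finset.sum_le_sum fun k hk => ?_
        have h := not_le.1 (Finset.mem_filter.1 hk).2
        rw [mul_assoc, ← Real.exp_add]
        have h1 : T ≤ |(k : ℝ) - pbdMean p| / √(pbdScale p) := by
          rw [le_div_iff₀ hs]; exact h.le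
        have := Real.one_le_exp (sub_nonneg.2 h1)
        rw [← sub_eq_add_neg]
        nlinarith [pbdPmf_nonneg hp k]
    _ ≤ ∑ k ∈ Finset.range (n + 1),
        pbdPmf p k * Real.exp (|(k : ℝ) - pbdMean p| / √(pbdScale p)) * Real.exp (-T) := by
        refine Finset.sum_le_sum_of_subset_of_nonneg (Finset.filter_subset _ _) fun k _ _ => ?_
        exact mul_nonneg (mul_nonneg (pbdPmf_nonneg hp k) (Real.exp_pos _).le) (Real.exp_pos _).le
    _ ≤ _ := by
        rw [← Finset.sum_mul]
        exact mul_le_mul_of_nonneg_right (pbd_exp_moment hp) (Real.exp_pos _).le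

/-! ### Characteristic functions -/

/-- The characteristic function `ξ ↦ 𝔼 exp (iξX)` of the Poisson binomial distribution. -/
noncomputable def pbdChar {n : ℕ} (p : Fin n → ℝ) (ξ : ℝ) : ℂ :=
  ∑ k ∈ Finset.range (n + 1), (pbdPmf p k : ℂ) * Complex.exp ((ξ * k : ℝ) * Complex.I)

lemma pbdChar_eq_prod {n : ℕ} (p : Fin n → ℝ) (ξ : ℝ) :
    pbdChar p ξ = ∏ i, (1 - (p i : ℂ) + p i * Complex.exp (ξ * Complex.I)) := by
  rw [← pbd_genfun]
  unfold pbdChar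
  refine Finset.sum_congr rfl fun k _ => ?_
  rw [← Complex.exp_nat_mul]
  push_cast
  ring_nf

@[fun_prop]
lemma continuous_pbdChar {n : ℕ} (p : Fin n → ℝ) : Continuous (pbdChar p) := by
  unfold pbdChar
  fun_prop

lemma bernoulli_char {q ξ : ℝ} :
    ‖1 - (q : ℂ) + q * Complex.exp (ξ * Complex.I)‖ ^ 2
      = 1 - 2 * (q * (1 - q)) * (1 - Real.cos ξ) := by
  rw [← Complex.normSq_eq_norm_sq, Complex.normSq_apply]
  have hre : (1 - (q : ℂ) + q * Complex.exp (ξ * Complex.I)).re = 1 - q + q * Real.cos ξ := by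
    simp [Complex.exp_ofReal_mul_I_re]
  have him : (1 - (q : ℂ) + q * Complex.exp (ξ * Complex.I)).im = q * Real.sin ξ := by
    simp [Complex.exp_ofReal_mul_I_im]
  rw [hre, him]
  linear_combination q ^ 2 * Real.sin_sq_add_cos_sq ξ

/-- Gaussian decay of the characteristic function at the natural scale. The factor `27` pays for
replacing the variance by `pbdScale p`, which is larger by `1`. -/
lemma pbdChar_decay {n : ℕ} {p : Fin n → ℝ} (hp : ∀ i, p i ∈ Set.Icc (0 : ℝ) 1) {ξ : ℝ}
    (hξ : |ξ| ≤ Real.pi) :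
    ‖pbdChar p ξ‖ ^ 2 ≤ 27 * Real.exp (-(pbdScale p * ξ ^ 2 / 4)) := by
  set v := ∑ i, p i * (1 - p i) with hv
  have hv0 : 0 ≤ v :=
    Finset.sum_nonneg fun i _ => mul_nonneg (hp i).1 (sub_nonneg.2 (hp i).2)
  have hpi : Real.pi ^ 2 ≤ 10 := by nlinarith [Real.pi_lt_d2, Real.pi_pos]
  have hcos : ξ ^ 2 / 8 ≤ 1 - Real.cos ξ := by
    have h := Real.cos_le_one_sub_mul_cos_sq hξ
    have : ξ ^ 2 / 8 ≤ 2 / Real.pi ^ 2 * ξ ^ 2 := by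
      have : 1 / 8 ≤ 2 / Real.pi ^ 2 := by
        rw [div_le_div_iff₀ (by norm_num) (by positivity)]; linarith
      nlinarith [sq_nonneg ξ]
    linarith
  have h1 : ‖pbdChar p ξ‖ ^ 2 ≤ Real.exp (-(v * ξ ^ 2 / 4)) := by
    rw [pbdChar_eq_prod, norm_prod, ← Finset.prod_pow]
    calc _ ≤ ∏ i, Real.exp (-(p i * (1 - p i)) * (ξ ^ 2 / 4)) := by
          refine Finset.prod_le_prod (fun i _ => by positivity) fun i _ => ?_
          rw [bernoulli_char]
          have := Real.add_one_le_exp (-(p i * (1 - p i)) * (ξ ^ 2 / 4))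
          have h0 : 0 ≤ p i * (1 - p i) := mul_nonneg (hp i).1 (sub_nonneg.2 (hp i).2)
          nlinarith
      _ = _ := by
          rw [← Real.exp_sum, ← Finset.sum_mul, Finset.sum_neg_distrib, ← hv]
          ring_nf
  have hξ2 : ξ ^ 2 ≤ 10 := by
    rw [← sq_abs]
    nlinarith [abs_nonneg ξ]
  have h2 : Real.exp (-(v * ξ ^ 2 / 4))
      = Real.exp (ξ ^ 2 / 4) * Real.exp (-(pbdScale p * ξ ^ 2 / 4)) := by
    rw [← Real.exp_add]
    unfold pbdScale
    rw [← hv]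
    ring_nf
  have h3 : Real.exp (ξ ^ 2 / 4) ≤ 27 := by
    calc Real.exp (ξ ^ 2 / 4) ≤ Real.exp (3 * 1) := Real.exp_le_exp.2 (by linarith)
      _ = Real.exp 1 ^ 3 := by rw [← Real.exp_nat_mul]; norm_num
      _ ≤ 2.72 ^ 3 := by
          gcongr
          linarith [Real.exp_one_lt_d9]
      _ ≤ 27 := by norm_num
  rw [h2] at h1
  exact h1.trans (mul_le_mul_of_nonneg_right h3 (Real.exp_pos _).le)

lemma integral_cos_int_mul {m : ℤ} (hm : m ≠ 0) :
    ∫ ξ in (-Real.pi)..Real.pi, Real.cos (ξ * m) = 0 := by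
  have hm' : (m : ℝ) ≠ 0 := by exact_mod_cast hm
  rw [intervalIntegral.integral_comp_mul_right Real.cos hm', integral_cos]
  have : Real.sin (Real.pi * m) = 0 := by rw [mul_comm]; exact Real.sin_int_mul_pi m
  rw [neg_mul, Real.sin_neg, this]
  simp

/-- Parseval's identity for trigonometric polynomials with real coefficients. -/
lemma parseval (s : Finset ℕ) (d : ℕ → ℝ) :
    ∫ ξ in (-Real.pi)..Real.pi, ‖∑ k ∈ s, (d k : ℂ) * Complex.exp ((ξ * k : ℝ) * Complex.I)‖ ^ 2
      = 2 * Real.pi * ∑ k ∈ s, d k ^ 2 := by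
  have h1 : ∀ ξ : ℝ, ‖∑ k ∈ s, (d k : ℂ) * Complex.exp ((ξ * k : ℝ) * Complex.I)‖ ^ 2
      = ∑ k ∈ s, ∑ l ∈ s, d k * d l * Real.cos (ξ * (((k : ℤ) - l : ℤ) : ℝ)) := by
    intro ξ
    rw [← Complex.normSq_eq_norm_sq, Complex.normSq_apply, Complex.re_sum, Complex.im_sum]
    simp only [Complex.re_ofReal_mul, Complex.im_ofReal_mul, Complex.exp_ofReal_mul_I_re,
      Complex.exp_ofReal_mul_I_im]
    rw [Finset.sum_mul_sum, Finset.sum_mul_sum, ← Finset.sum_add_distrib]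
    refine Finset.sum_congr rfl fun k _ => ?_
    rw [← Finset.sum_add_distrib]
    refine Finset.sum_congr rfl fun l _ => ?_
    push_cast
    rw [mul_sub, Real.cos_sub]
    ring
  simp only [h1]
  rw [intervalIntegral.integral_finsetSum
    (fun k _ => (by fun_prop : Continuous _).intervalIntegrable _ _), Finset.mul_sum]
  refine Finset.sum_congr rfl fun k hk => ?_
  rw [intervalIntegral.integral_finsetSum
    (fun k _ => (by fun_prop : Continuous _).intervalIntegrable _ _),
    Finset.sum_eq_single_of_mem k hk]
  · simp
    ring
  · intro l _ hl
    rw [intervalIntegral.integral_const_mul, integral_cos_int_mul (by omega), mul_zero]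

/-! ### Averages over independent samples -/

/-- The weight of a sample sequence under the product of `N` copies of `w`. -/
noncomputable def sampleWeight {α : Type*} {N : ℕ} (w : α → ℝ) (x : Fin N → α) : ℝ :=
  ∏ i, w (x i)

lemma sum_sampleWeight {α : Type*} [Fintype α] {N : ℕ} {w : α → ℝ} (hw : ∑ a, w a = 1) :
    ∑ x : Fin N → α, sampleWeight w x = 1 := by
  unfold sampleWeight
  rw [← Fintype.piFinset_univ, ← Finset.prod_univ_sum]
  simp [hw]

lemma sum_cons {α E : Type*} [Fintype α] [AddCommMonoid E] {N : ℕ} (F : (Fin (N + 1) → α) → E) :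
    ∑ x, F x = ∑ a, ∑ x : Fin N → α, F (Fin.cons a x) := by
  rw [← Fintype.sum_prod_type', ← (Fin.consEquiv (fun _ : Fin (N + 1) => α)).sum_comp]
  rfl

lemma sampleWeight_cons {α : Type*} {N : ℕ} (w : α → ℝ) (a : α) (x : Fin N → α) :
    sampleWeight w (Fin.cons a x : Fin (N + 1) → α) = w a * sampleWeight w x := by
  simp [sampleWeight, Fin.prod_univ_succ]

lemma sampleWeight_mean {α : Type*} [Fintype α] {w : α → ℝ} (hw : ∑ a, w a = 1) {E : Type*}
    [AddCommGroup E] [Module ℝ E] (g : α → E) (N : ℕ) :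
    ∑ x : Fin N → α, sampleWeight w x • ∑ i, g (x i) = (N : ℝ) • ∑ a, w a • g a := by
  induction N with
  | zero => simp
  | succ N ih =>
    rw [sum_cons]
    simp only [sampleWeight_cons, Fin.sum_univ_succ, Fin.cons_zero, Fin.cons_succ, smul_add,
      Finset.sum_add_distrib]
    have e1 : ∀ a : α, ∑ x : Fin N → α, (w a * sampleWeight w x) • g a = w a • g a := by
      intro a
      rw [← Finset.sum_smul, ← Finset.mul_sum, sum_sampleWeight hw, mul_one]
    have e2 : ∀ a : α, ∑ x : Fin N → α, (w a * sampleWeight w x) • ∑ i, g (x i)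
        = w a • ((N : ℝ) • ∑ a, w a • g a) := by
      intro a
      rw [← ih, Finset.smul_sum]
      simp only [mul_smul]
    simp only [e1, e2]
    rw [← Finset.sum_smul, hw]
    push_cast
    module

/-- Variances of independent centred variables add up. -/
lemma sampleWeight_sq {α : Type*} [Fintype α] {w : α → ℝ} (hw : ∑ a, w a = 1) (g : α → ℂ)
    (hg : ∑ a, w a • g a = 0) (N : ℕ) :
    ∑ x : Fin N → α, sampleWeight w x * ‖∑ i, g (x i)‖ ^ 2 = N * ∑ a, w a * ‖g a‖ ^ 2 := by
  induction N with
  | zero => simp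
  | succ N ih =>
    rw [sum_cons]
    have e0 : ∀ (a : α) (x : Fin N → α),
        sampleWeight w (Fin.cons a x : Fin (N + 1) → α)
          * ‖∑ i, g ((Fin.cons a x : Fin (N + 1) → α) i)‖ ^ 2
        = w a * ‖g a‖ ^ 2 * sampleWeight w x
          + (2 * w a) * inner ℝ (g a) (sampleWeight w x • ∑ i, g (x i))
          + w a * (sampleWeight w x * ‖∑ i, g (x i)‖ ^ 2) := by
      intro a x
      rw [sampleWeight_cons]
      simp only [Fin.sum_univ_succ, Fin.cons_zero, Fin.cons_succ]
      rw [norm_add_sq_real, real_inner_smul_right]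
      ring
    have e1 : ∀ a : α, ∑ x : Fin N → α, sampleWeight w (Fin.cons a x : Fin (N + 1) → α)
          * ‖∑ i, g ((Fin.cons a x : Fin (N + 1) → α) i)‖ ^ 2
        = w a * ‖g a‖ ^ 2 + w a * (N * ∑ a, w a * ‖g a‖ ^ 2) := by
      intro a
      simp only [e0, Finset.sum_add_distrib, ← Finset.mul_sum]
      rw [ih, sum_sampleWeight hw, ← inner_sum, sampleWeight_mean hw, hg]
      simp
    simp only [e1]
    rw [Finset.sum_add_distrib, ← Finset.sum_mul, hw]
    push_cast
    ring

/-! ### Samples compatible with a Poisson binomial distribution -/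

/-- The empirical characteristic function of a sample sequence. -/
noncomputable def empChar {n N : ℕ} (x : Fin N → Fin (n + 1)) (ξ : ℝ) : ℂ :=
  (N : ℝ)⁻¹ • ∑ i, Complex.exp ((ξ * (x i : ℕ) : ℝ) * Complex.I)

@[fun_prop]
lemma continuous_empChar {n N : ℕ} (x : Fin N → Fin (n + 1)) : Continuous (empChar x) := by
  unfold empChar
  fun_prop

/-- The weight of a sample sequence under independent draws from the Poisson binomial
distribution. -/
noncomputable def pbdWeight {n N : ℕ} (p : Fin n → ℝ) (x : Fin N → Fin (n + 1)) : ℝ :=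
  sampleWeight (fun a : Fin (n + 1) => pbdPmf p a) x

lemma pbdWeight_nonneg {n N : ℕ} {p : Fin n → ℝ} (hp : ∀ i, p i ∈ Set.Icc (0 : ℝ) 1)
    (x : Fin N → Fin (n + 1)) : 0 ≤ pbdWeight p x := by
  unfold pbdWeight sampleWeight
  exact Finset.prod_nonneg fun _ _ => pbdPmf_nonneg hp _

lemma pbd_sum_one_fin {n : ℕ} (p : Fin n → ℝ) : ∑ a : Fin (n + 1), pbdPmf p a = 1 := by
  rw [Fin.sum_univ_eq_sum_range (fun k => pbdPmf p k), pbd_sum_one]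

/-- The mean squared error of the empirical characteristic function, at any fixed frequency. -/
lemma empChar_variance {n N : ℕ} (hN : 0 < N) (p : Fin n → ℝ) (ξ : ℝ) :
    ∑ x : Fin N → Fin (n + 1), pbdWeight p x * ‖pbdChar p ξ - empChar x ξ‖ ^ 2 ≤ 1 / N := by
  have hN' : (0 : ℝ) < N := by exact_mod_cast hN
  set c := pbdChar p ξ with hc
  set e : Fin (n + 1) → ℂ := fun a => Complex.exp ((ξ * (a : ℕ) : ℝ) * Complex.I) with he
  have hw := pbd_sum_one_fin p
  have hmean : ∑ a : Fin (n + 1), pbdPmf p a • e a = c := by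
    rw [hc]
    unfold pbdChar
    rw [← Fin.sum_univ_eq_sum_range
      (fun k => (pbdPmf p k : ℂ) * Complex.exp ((ξ * k : ℝ) * Complex.I))]
    simp [he]
  have hcent : ∑ a : Fin (n + 1), pbdPmf p a • (e a - c) = 0 := by
    simp only [smul_sub, Finset.sum_sub_distrib]
    rw [hmean, ← Finset.sum_smul, hw, one_smul, sub_self]
  have hvar : ∑ a : Fin (n + 1), pbdPmf p a * ‖e a - c‖ ^ 2 ≤ 1 := by
    have h1 : ∀ a : Fin (n + 1), pbdPmf p a * ‖e a - c‖ ^ 2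
        = pbdPmf p a * (1 + ‖c‖ ^ 2) - 2 * inner ℝ (pbdPmf p a • e a) c := by
      intro a
      have : ‖e a‖ = 1 := by simp only [he]; exact Complex.norm_exp_ofReal_mul_I _
      rw [norm_sub_sq_real, this, real_inner_smul_left]
      ring
    simp only [h1]
    rw [Finset.sum_sub_distrib, ← Finset.sum_mul, ← Finset.mul_sum, hw, ← sum_inner, hmean,
      real_inner_self_eq_norm_sq]
    nlinarith [sq_nonneg ‖c‖]
  have hx : ∀ x : Fin N → Fin (n + 1), ‖c - empChar x ξ‖ ^ 2
      = ((N : ℝ)⁻¹) ^ 2 * ‖∑ i, (e (x i) - c)‖ ^ 2 := by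
    intro x
    have : c - empChar x ξ = -((N : ℝ)⁻¹ • ∑ i, (e (x i) - c)) := by
      unfold empChar
      rw [Finset.sum_sub_distrib, smul_sub]
      simp only [Finset.sum_const, Finset.card_univ, Fintype.card_fin, he]
      rw [← Nat.cast_smul_eq_nsmul ℝ, inv_smul_smul₀ hN'.ne']
      ring
    rw [this, norm_neg, norm_smul, mul_pow, Real.norm_of_nonneg (by positivity)]
  have hsq := sampleWeight_sq hw (fun a => e a - c) hcent N
  calc _ = ((N : ℝ)⁻¹) ^ 2 * ∑ x : Fin N → Fin (n + 1),
          pbdWeight p x * ‖∑ i, (e (x i) - c)‖ ^ 2 := by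
        rw [Finset.mul_sum]
        refine Finset.sum_congr rfl fun x _ => ?_
        rw [hx]; ring
    _ = ((N : ℝ)⁻¹) ^ 2 * (N * ∑ a : Fin (n + 1), pbdPmf p a * ‖e a - c‖ ^ 2) := by
        rw [← hsq]; rfl
    _ ≤ ((N : ℝ)⁻¹) ^ 2 * (N * 1) := by gcongr
    _ = 1 / N := by field_simp

/-- The largest frequency that is compared: beyond `B / √(pbdScale p)` the characteristic function
is negligible, and frequencies only matter up to `π`. -/
noncomputable def cutoff {n : ℕ} (B : ℝ) (p : Fin n → ℝ) : ℝ :=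
  min Real.pi (B / √(pbdScale p))

/-- A sample sequence `x` is compatible with the parameter vector `p` if its empirical
characteristic function is close to that of `p` on low frequencies in mean square, its mean
squared deviation from the mean of `p` is at most of the order of the variance of `p`, and the
characteristic functions are also close at the single frequency `6 / √(pbdScale p)`. The last two
conditions serve to pin down the variance up to a constant factor. -/
structure Compatible {n N : ℕ} (B τ : ℝ) (x : Fin N → Fin (n + 1)) (p : Fin n → ℝ) : Prop where
  fourier : ∫ ξ in Set.Icc (-cutoff B p) (cutoff B p), ‖pbdChar p ξ - empChar x ξ‖ ^ 2
    ≤ τ / √(pbdScale p)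
  spread : ∑ i, (((x i : ℕ) : ℝ) - pbdMean p) ^ 2 ≤ 480 * pbdScale p * N
  point : ‖pbdChar p (6 / √(pbdScale p)) - empChar x (6 / √(pbdScale p))‖ ^ 2 ≤ 1 / 16

/-- With probability at least `9/10` the samples are compatible with their own distribution, by
Markov's inequality applied to the three quantities together. -/
lemma compatible_prob {n N : ℕ} (hN : 640 ≤ N) {B : ℝ} (hB : 0 < B) {p : Fin n → ℝ}
    (hp : ∀ i, p i ∈ Set.Icc (0 : ℝ) 1) :
    9 / 10 ≤ ∑ x ∈ Finset.univ.filter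
      (fun x : Fin N → Fin (n + 1) => Compatible B (80 * B / N) x p), pbdWeight p x := by
  have hV := one_le_pbdScale hp
  have hs : 0 < √(pbdScale p) := Real.sqrt_pos.2 (by linarith)
  have hN' : (640 : ℝ) ≤ N := by exact_mod_cast hN
  have hN0 : (0 : ℝ) < N := by linarith
  set V := pbdScale p with hVdef
  set K := cutoff B p with hK
  have hK0 : 0 ≤ K := le_min Real.pi_pos.le (by positivity)
  set F1 : (Fin N → Fin (n + 1)) → ℝ :=
    fun x => ∫ ξ in Set.Icc (-K) K, ‖pbdChar p ξ - empChar x ξ‖ ^ 2 with hF1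
  set F2 : (Fin N → Fin (n + 1)) → ℝ :=
    fun x => ∑ i, (((x i : ℕ) : ℝ) - pbdMean p) ^ 2 with hF2
  set F3 : (Fin N → Fin (n + 1)) → ℝ :=
    fun x => ‖pbdChar p (6 / √V) - empChar x (6 / √V)‖ ^ 2 with hF3
  have n1 : ∀ x, 0 ≤ F1 x := fun x => MeasureTheory.integral_nonneg fun _ => by positivity
  have n2 : ∀ x, 0 ≤ F2 x := fun x => Finset.sum_nonneg fun _ _ => by positivity
  have n3 : ∀ x, 0 ≤ F3 x := fun x => by positivity
  have E1 : ∑ x, pbdWeight p x * F1 x ≤ 2 * B / (N * √V) := by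
    have : ∑ x : Fin N → Fin (n + 1), pbdWeight p x * F1 x
        = ∫ ξ in Set.Icc (-K) K, ∑ x : Fin N → Fin (n + 1),
            pbdWeight p x * ‖pbdChar p ξ - empChar x ξ‖ ^ 2 := by
      rw [MeasureTheory.integral_finsetSum _ fun x _ =>
        (by fun_prop : Continuous fun ξ => pbdWeight p x * ‖pbdChar p ξ - empChar x ξ‖ ^ 2)
          |>.integrableOn_Icc]
      refine Finset.sum_congr rfl fun x _ => ?_
      rw [MeasureTheory.integral_const_mul]
    rw [this]
    calc _ ≤ ∫ ξ in Set.Icc (-K) K, (1 / N : ℝ) := by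
          refine MeasureTheory.setIntegral_mono
            (by fun_prop : Continuous _).integrableOn_Icc continuous_const.integrableOn_Icc ?_
          exact fun ξ => empChar_variance (by omega) p ξ
      _ = 2 * K / N := by
          rw [MeasureTheory.setIntegral_const, MeasureTheory.measureReal_def, Real.volume_Icc,
            ENNReal.toReal_ofReal (by linarith), smul_eq_mul]
          ring
      _ ≤ 2 * (B / √V) / N := by
          gcongr
          exact min_le_right _ _
      _ = _ := by field_simp
  have E2 : ∑ x, pbdWeight p x * F2 x ≤ N * (12 * V) := by
    have h := sampleWeight_mean (pbd_sum_one_fin p)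
      (fun a : Fin (n + 1) => (((a : ℕ) : ℝ) - pbdMean p) ^ 2) N
    simp only [smul_eq_mul] at h
    have h2 := pbd_second_moment hp
    rw [← Fin.sum_univ_eq_sum_range (fun k => pbdPmf p k * ((k : ℝ) - pbdMean p) ^ 2)] at h2
    calc _ = N * ∑ a : Fin (n + 1), pbdPmf p a * (((a : ℕ) : ℝ) - pbdMean p) ^ 2 := h
      _ ≤ _ := by gcongr
  have E3 : ∑ x, pbdWeight p x * F3 x ≤ 1 / N := empChar_variance (by omega) p _
  set t1 : ℝ := 80 * B / N / √V with ht1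
  have ht1pos : 0 < t1 := by positivity
  set H : (Fin N → Fin (n + 1)) → ℝ :=
    fun x => t1⁻¹ * F1 x + (480 * V * N)⁻¹ * F2 x + 16 * F3 x with hH
  have m1 : ∀ x, 0 ≤ t1⁻¹ * F1 x := fun x => mul_nonneg (by positivity) (n1 x)
  have m2 : ∀ x, 0 ≤ (480 * V * N)⁻¹ * F2 x := fun x => mul_nonneg (by positivity) (n2 x)
  have EH : ∑ x, pbdWeight p x * H x ≤ 1 / 10 := by
    have : ∑ x, pbdWeight p x * H x = t1⁻¹ * ∑ x, pbdWeight p x * F1 x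
        + (480 * V * N)⁻¹ * ∑ x, pbdWeight p x * F2 x + 16 * ∑ x, pbdWeight p x * F3 x := by
      simp only [Finset.mul_sum, ← Finset.sum_add_distrib]
      refine Finset.sum_congr rfl fun x _ => ?_
      simp only [hH]
      ring
    rw [this]
    have a1 : t1⁻¹ * ∑ x, pbdWeight p x * F1 x ≤ 1 / 40 := by
      calc _ ≤ t1⁻¹ * (2 * B / (N * √V)) := by gcongr
        _ = 1 / 40 := by rw [ht1]; field_simp; norm_num
    have a2 : (480 * V * N)⁻¹ * ∑ x, pbdWeight p x * F2 x ≤ 1 / 40 := by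
      calc _ ≤ (480 * V * N)⁻¹ * (N * (12 * V)) := by gcongr
        _ = 1 / 40 := by field_simp; norm_num
    have a3 : 1 / (N : ℝ) ≤ 1 / 640 := one_div_le_one_div_of_le (by norm_num) hN'
    linarith
  have hgood : ∀ x, H x ≤ 1 → Compatible B (80 * B / N) x p := by
    intro x hx
    have b1 := m1 x
    have b2 := m2 x
    have b3 := n3 x
    simp only [hH] at hx
    refine ⟨?_, ?_, ?_⟩
    · have : t1⁻¹ * F1 x ≤ 1 := by linarith
      rwa [inv_mul_le_iff₀ ht1pos, mul_one] at this
    · have : (480 * V * N)⁻¹ * F2 x ≤ 1 := by linarith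
      rwa [inv_mul_le_iff₀ (by positivity), mul_one] at this
    · have : 16 * F3 x ≤ 1 := by linarith
      change F3 x ≤ 1 / 16
      linarith
  have htot : ∑ x : Fin N → Fin (n + 1), pbdWeight p x = 1 := sum_sampleWeight (pbd_sum_one_fin p)
  have hsplit := Finset.sum_filter_add_sum_filter_not Finset.univ
    (fun x : Fin N → Fin (n + 1) => Compatible B (80 * B / N) x p) (pbdWeight p)
  have hbad : ∑ x ∈ Finset.univ.filter
      (fun x : Fin N → Fin (n + 1) => ¬ Compatible B (80 * B / N) x p), pbdWeight p x ≤ 1 / 10 := by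
    refine le_trans ?_ EH
    calc _ ≤ ∑ x ∈ Finset.univ.filter
          (fun x : Fin N → Fin (n + 1) => ¬ Compatible B (80 * B / N) x p),
            pbdWeight p x * H x := by
          refine Finset.sum_le_sum fun x hx => ?_
          have h1 : 1 ≤ H x := by
            by_contra hlt
            exact (Finset.mem_filter.1 hx).2 (hgood x (by linarith))
          nlinarith [pbdWeight_nonneg hp x]
      _ ≤ _ := by
          refine Finset.sum_le_sum_of_subset_of_nonneg (Finset.filter_subset _ _) fun x _ _ => ?_
          refine mul_nonneg (pbdWeight_nonneg hp x) ?_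
          have b1 := m1 x
          have b2 := m2 x
          have b3 := n3 x
          simp only [hH]
          linarith
  linarith

/-! ### Two distributions compatible with the same samples are close -/

lemma empChar_lower {n N : ℕ} (hN : 0 < N) (x : Fin N → Fin (n + 1)) (m ξ : ℝ) :
    1 - ξ ^ 2 / 2 * ((N : ℝ)⁻¹ * ∑ i, (((x i : ℕ) : ℝ) - m) ^ 2) ≤ ‖empChar x ξ‖ := by
  have hN' : (0 : ℝ) < N := by exact_mod_cast hN
  -- Centring at `m` multiplies the empirical characteristic function by a unimodular factor.
  set u : ℂ := Complex.exp ((-(ξ * m) : ℝ) * Complex.I) with hu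
  have h1 : ‖empChar x ξ‖ = ‖u * empChar x ξ‖ := by
    rw [norm_mul, hu, Complex.norm_exp_ofReal_mul_I, one_mul]
  have h2 : (u * empChar x ξ).re = (N : ℝ)⁻¹ * ∑ i, Real.cos (ξ * (((x i : ℕ) : ℝ) - m)) := by
    unfold empChar
    rw [mul_smul_comm, Complex.smul_re, Finset.mul_sum, Complex.re_sum, smul_eq_mul]
    congr 1
    refine Finset.sum_congr rfl fun i _ => ?_
    rw [hu, ← Complex.exp_add, ← add_mul, ← Complex.ofReal_add, Complex.exp_ofReal_mul_I_re]
    ring_nf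
  have h3 : (N : ℝ)⁻¹ * ∑ i, (1 - ξ ^ 2 / 2 * (((x i : ℕ) : ℝ) - m) ^ 2)
      ≤ (N : ℝ)⁻¹ * ∑ i, Real.cos (ξ * (((x i : ℕ) : ℝ) - m)) := by
    gcongr with i
    have := Real.one_sub_sq_div_two_le_cos (x := ξ * (((x i : ℕ) : ℝ) - m))
    nlinarith
  rw [h1]
  refine le_trans ?_ ((Complex.re_le_norm _))
  rw [h2]
  refine le_trans (le_of_eq ?_) h3
  rw [Finset.sum_sub_distrib, ← Finset.mul_sum]
  simp only [Finset.sum_const, Finset.card_univ, Fintype.card_fin, nsmul_eq_mul, mul_one]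
  field_simp

/-- Scales of compatible distributions agree up to a constant: otherwise, at the frequency
`6 / √(pbdScale p)`, the empirical characteristic function would be near `1` because the samples
are concentrated at the scale of `q`, and small because it is close to that of `p`. -/
lemma scale_compare {n N : ℕ} (hN : 0 < N) {B τ : ℝ} {x : Fin N → Fin (n + 1)} {p q : Fin n → ℝ}
    (hp : ∀ i, p i ∈ Set.Icc (0 : ℝ) 1) (hq : ∀ i, q i ∈ Set.Icc (0 : ℝ) 1)
    (hcp : Compatible B τ x p) (hcq : Compatible B τ x q) :
    pbdScale p ≤ 20000 * pbdScale q := by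
  have hN' : (0 : ℝ) < N := by exact_mod_cast hN
  have hV := one_le_pbdScale hp
  have hW := one_le_pbdScale hq
  by_cases hsmall : pbdScale p ≤ 36
  · linarith
  have hV36 : 36 < pbdScale p := not_le.1 hsmall
  set V := pbdScale p with hVdef
  have hs6 : 6 ≤ √V := Real.le_sqrt_of_sq_le (by linarith)
  have hξ2 : (6 / √V) ^ 2 = 36 / V := by
    rw [div_pow, Real.sq_sqrt (by linarith)]; norm_num
  have hξ : |6 / √V| ≤ Real.pi := by
    rw [abs_of_nonneg (by positivity)]
    have : 6 / √V ≤ 1 := by rw [div_le_one (by linarith)]; exact hs6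
    linarith [Real.pi_gt_three]
  have h1 := pbdChar_decay hp hξ
  rw [hξ2, ← hVdef] at h1
  have h2 : -(V * (36 / V) / 4) = -9 := by
    field_simp; norm_num
  rw [h2] at h1
  have h3 : Real.exp (-9) ≤ 1 / 512 := by
    rw [Real.exp_neg, one_div]
    apply inv_anti₀ (by norm_num)
    calc (512 : ℝ) = 2 ^ 9 := by norm_num
      _ ≤ Real.exp 1 ^ 9 := by
          gcongr
          linarith [Real.exp_one_gt_d9]
      _ = Real.exp 9 := by rw [← Real.exp_nat_mul]; norm_num
  have h4 : ‖pbdChar p (6 / √V)‖ ≤ 1 / 4 := by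
    refine abs_le_of_sq_le_sq' ?_ (by norm_num) |>.2
    linarith
  have h5 : ‖pbdChar p (6 / √V) - empChar x (6 / √V)‖ ≤ 1 / 4 := by
    refine abs_le_of_sq_le_sq' ?_ (by norm_num) |>.2
    have := hcp.point
    rw [← hVdef] at this
    linarith
  have h6 : ‖empChar x (6 / √V)‖ ≤ 1 / 2 := by
    have := norm_sub_norm_le (empChar x (6 / √V)) (pbdChar p (6 / √V))
    rw [norm_sub_rev] at this
    linarith
  have h7 := empChar_lower hN x (pbdMean q) (6 / √V)
  rw [hξ2] at h7
  have h8 : (N : ℝ)⁻¹ * ∑ i, (((x i : ℕ) : ℝ) - pbdMean q) ^ 2 ≤ 480 * pbdScale q := by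
    rw [inv_mul_le_iff₀ hN']
    linarith [hcq.spread]
  have h9 : 36 / V / 2 * ((N : ℝ)⁻¹ * ∑ i, (((x i : ℕ) : ℝ) - pbdMean q) ^ 2)
      ≤ 36 / V / 2 * (480 * pbdScale q) := by gcongr
  have h10 : 1 / 2 ≤ 36 / V / 2 * (480 * pbdScale q) := by linarith
  have h11 : 36 / V / 2 * (480 * pbdScale q) = 8640 * pbdScale q / V := by ring
  rw [h11, le_div_iff₀ (by linarith)] at h10
  linarith

lemma dTV_eq_sum {n : ℕ} (p q : Fin n → ℝ) :
    dTV (pbdPmf p) (pbdPmf q)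
      = (1 / 2) * ∑ k ∈ Finset.range (n + 1), |pbdPmf p k - pbdPmf q k| := by
  unfold dTV
  rw [tsum_eq_sum]
  intro k hk
  have hk' : n < k := by simpa [Nat.lt_succ_iff] using hk
  rw [pbdPmf_eq_zero p hk', pbdPmf_eq_zero q hk', sub_zero, abs_zero]

/-- Total variation distance is the total excess of one distribution over the other, which is at
most the mass of `p` outside a window plus the `ℓ¹` distance inside it. -/
lemma dTV_le_window {n : ℕ} {p q : Fin n → ℝ} (hp : ∀ i, p i ∈ Set.Icc (0 : ℝ) 1)
    (hq : ∀ i, q i ∈ Set.Icc (0 : ℝ) 1) (A : ℕ → Prop) :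
    dTV (pbdPmf p) (pbdPmf q)
      ≤ ∑ k ∈ (Finset.range (n + 1)).filter (fun k => ¬ A k), pbdPmf p k
        + ∑ k ∈ (Finset.range (n + 1)).filter A, |pbdPmf p k - pbdPmf q k| := by
  have h0 : ∑ k ∈ Finset.range (n + 1), (pbdPmf p k - pbdPmf q k) = 0 := by
    rw [Finset.sum_sub_distrib, pbd_sum_one, pbd_sum_one, sub_self]
  rw [dTV_eq_sum, Finset.sum_filter, Finset.sum_filter, ← Finset.sum_add_distrib]
  calc _ = ∑ k ∈ Finset.range (n + 1),
          ((1 / 2) * |pbdPmf p k - pbdPmf q k| + (1 / 2) * (pbdPmf p k - pbdPmf q k)) := by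
        rw [Finset.sum_add_distrib, ← Finset.mul_sum, ← Finset.mul_sum, h0, mul_zero, add_zero]
    _ ≤ _ := by
        refine Finset.sum_le_sum fun k _ => ?_
        have a := pbdPmf_nonneg hp k
        have b := pbdPmf_nonneg hq k
        by_cases hA : A k
        · simp only [hA, not_true_eq_false, if_false, if_true]
          linarith [le_abs_self (pbdPmf p k - pbdPmf q k)]
        · simp only [hA, not_false_eq_true, if_false, if_true]
          rcases abs_cases (pbdPmf p k - pbdPmf q k) with ⟨h, _⟩ | ⟨h, _⟩ <;> linarith

lemma card_window (n : ℕ) (m R : ℝ) (hR : 0 ≤ R) :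
    (((Finset.range n).filter (fun k : ℕ => |(k : ℝ) - m| ≤ R)).card : ℝ) ≤ 2 * R + 1 := by
  have hsub : (Finset.range n).filter (fun k : ℕ => |(k : ℝ) - m| ≤ R)
      ⊆ Finset.Icc ⌈m - R⌉₊ ⌊m + R⌋₊ := by
    intro k hk
    have h := abs_le.1 (Finset.mem_filter.1 hk).2
    rw [Finset.mem_Icc]
    exact ⟨Nat.ceil_le.2 (by linarith), Nat.le_floor (by linarith)⟩
  have h1 := Finset.card_le_card hsub
  rw [Nat.card_Icc] at h1
  rcases Nat.lt_or_ge (⌊m + R⌋₊ + 1) ⌈m - R⌉₊ with h | h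
  · have : ((Finset.range n).filter (fun k : ℕ => |(k : ℝ) - m| ≤ R)).card = 0 := by omega
    rw [this]
    push_cast
    linarith
  · by_cases hneg : m + R < 0
    · have hempty : (Finset.range n).filter (fun k : ℕ => |(k : ℝ) - m| ≤ R) = ∅ := by
        refine Finset.filter_false_of_mem fun k _ hk => ?_
        have h := abs_le.1 hk
        have : (0 : ℝ) ≤ k := by positivity
        linarith
      rw [hempty]
      simp
      linarith
    have h2 : (((Finset.range n).filter (fun k : ℕ => |(k : ℝ) - m| ≤ R)).card : ℝ)
        ≤ ((⌊m + R⌋₊ + 1 - ⌈m - R⌉₊ : ℕ) : ℝ) := by exact_mod_cast h1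
    rw [Nat.cast_sub h] at h2
    push_cast at h2
    have h3 := Nat.floor_le (not_lt.1 hneg)
    have h4 := Nat.le_ceil (m - R)
    linarith

lemma norm_sub_sq_le_two (a b : ℂ) : ‖a - b‖ ^ 2 ≤ 2 * ‖a‖ ^ 2 + 2 * ‖b‖ ^ 2 := by
  have h := norm_sub_le a b
  have h0 := norm_nonneg (a - b)
  nlinarith [sq_nonneg (‖a‖ - ‖b‖)]

/-- The `ℓ²` bound: by Parseval the squared distance is an integral over frequencies, where low
frequencies are controlled through the common empirical characteristic function and high ones by
the Gaussian decay of both characteristic functions. -/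
lemma l2_bound {n N : ℕ} {B τ : ℝ} (hB : 0 < B) (hτ : 0 ≤ τ)
    {x : Fin N → Fin (n + 1)} {p q : Fin n → ℝ}
    (hp : ∀ i, p i ∈ Set.Icc (0 : ℝ) 1) (hq : ∀ i, q i ∈ Set.Icc (0 : ℝ) 1)
    (hcp : Compatible B τ x p) (hcq : Compatible B τ x q)
    (hle : pbdScale q ≤ pbdScale p) (hge : pbdScale p ≤ 20000 * pbdScale q) :
    ∑ k ∈ Finset.range (n + 1), (pbdPmf p k - pbdPmf q k) ^ 2
      ≤ (60 * τ + 20000 * Real.exp (-(B ^ 2 / 160000))) / √(pbdScale p) := by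
  have hV := one_le_pbdScale hp
  have hW := one_le_pbdScale hq
  set V := pbdScale p with hVdef
  set W := pbdScale q with hWdef
  have hsV : 0 < √V := Real.sqrt_pos.2 (by linarith)
  have hsW : 0 < √W := Real.sqrt_pos.2 (by linarith)
  have hWV : 1 / √W ≤ 150 / √V := by
    rw [div_le_div_iff₀ hsW hsV, one_mul]
    rw [Real.sqrt_le_left (by positivity), mul_pow, Real.sq_sqrt (by linarith)]
    linarith
  set E := Real.exp (-(B ^ 2 / 160000)) with hE
  have hE0 : 0 < E := Real.exp_pos _
  set K := cutoff B p with hK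
  have hKpi : K ≤ Real.pi := min_le_left _ _
  have hKq : K ≤ cutoff B q := by
    refine min_le_min le_rfl ?_
    gcongr
  -- The error of the low frequencies.
  set L : ℝ → ℝ :=
    fun ξ => 2 * ‖pbdChar p ξ - empChar x ξ‖ ^ 2 + 2 * ‖pbdChar q ξ - empChar x ξ‖ ^ 2 with hL
  have hLcont : Continuous L := by simp only [hL]; fun_prop
  -- A bound for the high frequencies.
  set G : ℝ → ℝ := fun ξ => 108 * E * Real.exp (-(W / 8) * ξ ^ 2) with hG
  have hW8 : 0 < W / 8 := by linarith
  have hGint : MeasureTheory.Integrable G := (integrable_exp_neg_mul_sq hW8).const_mul _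
  have hG0 : ∀ ξ, 0 ≤ G ξ := fun ξ => by positivity
  have hL0 : ∀ ξ, 0 ≤ L ξ := fun ξ => by positivity
  have hpt : ∀ ξ ∈ Set.Icc (-Real.pi) Real.pi,
      ‖pbdChar p ξ - pbdChar q ξ‖ ^ 2 ≤ (Set.Icc (-K) K).indicator L ξ + G ξ := by
    intro ξ hξ
    by_cases hin : ξ ∈ Set.Icc (-K) K
    · rw [Set.indicator_of_mem hin]
      have := norm_sub_sq_le_two (pbdChar p ξ - empChar x ξ) (pbdChar q ξ - empChar x ξ)
      rw [sub_sub_sub_cancel_right] at this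
      have := hG0 ξ
      simp only [hL]
      linarith
    · rw [Set.indicator_of_notMem hin, zero_add]
      have habs : |ξ| ≤ Real.pi := abs_le.2 hξ
      have hgt : B / √V < |ξ| := by
        have h1 : K < |ξ| := by
          by_contra hc
          exact hin (abs_le.1 (not_lt.1 hc))
        rcases min_lt_iff.1 h1 with h | h
        · linarith
        · exact h
      have hξV : B ^ 2 ≤ V * ξ ^ 2 := by
        rw [div_lt_iff₀ hsV] at hgt
        have := pow_le_pow_left₀ hB.le hgt.le 2
        rw [mul_pow, sq_abs, Real.sq_sqrt (by linarith)] at this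
        linarith
      have hξW : B ^ 2 ≤ 20000 * (W * ξ ^ 2) := by nlinarith [sq_nonneg ξ]
      have d1 := pbdChar_decay hp habs
      have d2 := pbdChar_decay hq habs
      rw [← hVdef] at d1
      rw [← hWdef] at d2
      have d3 : Real.exp (-(V * ξ ^ 2 / 4)) ≤ Real.exp (-(W * ξ ^ 2 / 4)) := by
        apply Real.exp_le_exp.2
        nlinarith [sq_nonneg ξ]
      have d4 : Real.exp (-(W * ξ ^ 2 / 4)) ≤ E * Real.exp (-(W / 8) * ξ ^ 2) := by
        rw [hE, ← Real.exp_add]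
        apply Real.exp_le_exp.2
        linarith
      have d5 := norm_sub_sq_le_two (pbdChar p ξ) (pbdChar q ξ)
      simp only [hG]
      linarith
  have hpars : ∫ ξ in Set.Icc (-Real.pi) Real.pi, ‖pbdChar p ξ - pbdChar q ξ‖ ^ 2
      = 2 * Real.pi * ∑ k ∈ Finset.range (n + 1), (pbdPmf p k - pbdPmf q k) ^ 2 := by
    rw [← parseval, intervalIntegral.integral_of_le (by linarith [Real.pi_pos]),
      MeasureTheory.integral_Icc_eq_integral_Ioc]
    congr 1
    funext ξ
    unfold pbdChar
    rw [← Finset.sum_sub_distrib]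
    push_cast
    simp only [sub_mul]
  have hLint : MeasureTheory.IntegrableOn L (Set.Icc (-K) K) := hLcont.integrableOn_Icc
  have hind : MeasureTheory.Integrable ((Set.Icc (-K) K).indicator L) :=
    hLint.integrable_indicator measurableSet_Icc
  have hbound : ∫ ξ in Set.Icc (-Real.pi) Real.pi, ‖pbdChar p ξ - pbdChar q ξ‖ ^ 2
      ≤ (∫ ξ in Set.Icc (-K) K, L ξ) + ∫ ξ, G ξ := by
    calc _ ≤ ∫ ξ in Set.Icc (-Real.pi) Real.pi, ((Set.Icc (-K) K).indicator L ξ + G ξ) := by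
          refine MeasureTheory.setIntegral_mono_on (by fun_prop : Continuous _).integrableOn_Icc
            (hind.add hGint).integrableOn measurableSet_Icc hpt
      _ ≤ ∫ ξ, ((Set.Icc (-K) K).indicator L ξ + G ξ) := by
          refine MeasureTheory.setIntegral_le_integral (hind.add hGint) ?_
          refine Filter.Eventually.of_forall fun ξ => ?_
          exact add_nonneg (Set.indicator_nonneg (fun _ _ => hL0 _) _) (hG0 _)
      _ = _ := by
          rw [MeasureTheory.integral_add hind hGint,
            MeasureTheory.integral_indicator measurableSet_Icc]
  have hLbound : ∫ ξ in Set.Icc (-K) K, L ξ ≤ 302 * τ / √V := by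
    have i1 : MeasureTheory.IntegrableOn (fun ξ => ‖pbdChar p ξ - empChar x ξ‖ ^ 2)
        (Set.Icc (-K) K) := (by fun_prop : Continuous _).integrableOn_Icc
    have i2 : MeasureTheory.IntegrableOn (fun ξ => ‖pbdChar q ξ - empChar x ξ‖ ^ 2)
        (Set.Icc (-K) K) := (by fun_prop : Continuous _).integrableOn_Icc
    have i3 : MeasureTheory.IntegrableOn (fun ξ => ‖pbdChar q ξ - empChar x ξ‖ ^ 2)
        (Set.Icc (-cutoff B q) (cutoff B q)) := (by fun_prop : Continuous _).integrableOn_Icc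
    simp only [hL]
    rw [MeasureTheory.integral_add (i1.const_mul 2) (i2.const_mul 2),
      MeasureTheory.integral_const_mul, MeasureTheory.integral_const_mul]
    have j1 := hcp.fourier
    have j2 : ∫ ξ in Set.Icc (-K) K, ‖pbdChar q ξ - empChar x ξ‖ ^ 2
        ≤ τ / √W := by
      refine le_trans ?_ hcq.fourier
      refine MeasureTheory.setIntegral_mono_set i3
        (Filter.Eventually.of_forall fun _ => by positivity) ?_
      exact (Set.Icc_subset_Icc (by linarith) hKq).eventuallyLE
    have j3 : τ / √W ≤ 150 * τ / √V := by
      calc τ / √W = τ * (1 / √W) := by ring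
        _ ≤ τ * (150 / √V) := by gcongr
        _ = _ := by ring
    calc _ ≤ 2 * (τ / √V) + 2 * (150 * τ / √V) := by linarith
      _ = _ := by ring
  have hGbound : ∫ ξ, G ξ ≤ 108 * 150 * 6 * E / √V := by
    simp only [hG]
    rw [MeasureTheory.integral_const_mul, integral_gaussian]
    have k1 : √(Real.pi / (W / 8)) ≤ 6 * (1 / √W) := by
      rw [Real.sqrt_le_left (by positivity), mul_pow, div_pow, Real.sq_sqrt (by linarith),
        div_le_iff₀ (by linarith)]
      have : 6 ^ 2 * (1 ^ 2 / W) * (W / 8) = 36 / 8 := by field_simp; norm_num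
      rw [this]
      linarith [Real.pi_lt_d2]
    calc 108 * E * √(Real.pi / (W / 8)) ≤ 108 * E * (6 * (150 / √V)) := by
          gcongr
          linarith
      _ = _ := by ring
  rw [hpars] at hbound
  set D := ∑ k ∈ Finset.range (n + 1), (pbdPmf p k - pbdPmf q k) ^ 2 with hD
  have hD0 : 0 ≤ D := Finset.sum_nonneg fun _ _ => by positivity
  have hfin : 6 * D ≤ 6 * ((60 * τ + 20000 * E) / √V) := by
    calc 6 * D ≤ 2 * Real.pi * D := by nlinarith [Real.pi_gt_three]
      _ ≤ 302 * τ / √V + 108 * 150 * 6 * E / √V := by linarith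
      _ = (302 * τ + 97200 * E) / √V := by ring
      _ ≤ (6 * (60 * τ + 20000 * E)) / √V := by
          gcongr
          linarith
      _ = _ := by ring
  linarith

lemma close_of_le {n N : ℕ} {B τ T : ℝ} (hB : 0 < B) (hτ : 0 ≤ τ) (hT : 1 ≤ T) (hN : 0 < N)
    {x : Fin N → Fin (n + 1)} {p q : Fin n → ℝ}
    (hp : ∀ i, p i ∈ Set.Icc (0 : ℝ) 1) (hq : ∀ i, q i ∈ Set.Icc (0 : ℝ) 1)
    (hcp : Compatible B τ x p) (hcq : Compatible B τ x q)
    (hle : pbdScale q ≤ pbdScale p) :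
    dTV (pbdPmf p) (pbdPmf q) ≤ 6 * Real.exp (-T)
      + √(3 * T * (60 * τ + 20000 * Real.exp (-(B ^ 2 / 160000)))) := by
  have hV := one_le_pbdScale hp
  have hs : 1 ≤ √(pbdScale p) := by rwa [Real.one_le_sqrt]
  have h1 := dTV_le_window hp hq (fun k : ℕ => |(k : ℝ) - pbdMean p| ≤ T * √(pbdScale p))
  have h2 := pbd_tail hp T
  have h3 := l2_bound hB hτ hp hq hcp hcq hle (scale_compare hN hp hq hcp hcq)
  set E := Real.exp (-(B ^ 2 / 160000)) with hE
  have hE0 : 0 < E := Real.exp_pos _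
  set S := (Finset.range (n + 1)).filter
    (fun k : ℕ => |(k : ℝ) - pbdMean p| ≤ T * √(pbdScale p)) with hS
  have h4 : ∑ k ∈ S, |pbdPmf p k - pbdPmf q k| ≤ √(3 * T * (60 * τ + 20000 * E)) := by
    apply Real.le_sqrt_of_sq_le
    have hc : (S.card : ℝ) ≤ 3 * T * √(pbdScale p) := by
      have := card_window (n + 1) (pbdMean p) (T * √(pbdScale p)) (by positivity)
      rw [← hS] at this
      nlinarith
    have hsum : ∑ k ∈ S, |pbdPmf p k - pbdPmf q k| ^ 2
        ≤ (60 * τ + 20000 * E) / √(pbdScale p) := by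
      refine le_trans ?_ h3
      simp only [sq_abs]
      exact Finset.sum_le_sum_of_subset_of_nonneg (Finset.filter_subset _ _)
        fun _ _ _ => sq_nonneg _
    calc (∑ k ∈ S, |pbdPmf p k - pbdPmf q k|) ^ 2
        ≤ S.card * ∑ k ∈ S, |pbdPmf p k - pbdPmf q k| ^ 2 := sq_sum_le_card_mul_sum_sq
      _ ≤ (3 * T * √(pbdScale p)) * ((60 * τ + 20000 * E) / √(pbdScale p)) := by
          gcongr
      _ = _ := by field_simp
  linarith

lemma dTV_comm (P Q : ℕ → ℝ) : dTV P Q = dTV Q P := by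
  unfold dTV
  simp only [abs_sub_comm]

lemma close_of_compatible {n N : ℕ} {B τ T : ℝ} (hB : 0 < B) (hτ : 0 ≤ τ) (hT : 1 ≤ T)
    (hN : 0 < N) {x : Fin N → Fin (n + 1)} {p q : Fin n → ℝ}
    (hp : ∀ i, p i ∈ Set.Icc (0 : ℝ) 1) (hq : ∀ i, q i ∈ Set.Icc (0 : ℝ) 1)
    (hcp : Compatible B τ x p) (hcq : Compatible B τ x q) :
    dTV (pbdPmf p) (pbdPmf q) ≤ 6 * Real.exp (-T)
      + √(3 * T * (60 * τ + 20000 * Real.exp (-(B ^ 2 / 160000)))) := by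
  rcases le_total (pbdScale q) (pbdScale p) with h | h
  · exact close_of_le hB hτ hT hN hp hq hcp hcq h
  · rw [dTV_comm]
    exact close_of_le hB hτ hT hN hq hp hcq hcp h

/-! ### Choice of constants -/

/-- With window parameter `6 log (1/ε)`, frequency cutoff `4000 log (1/ε)` and
`3·10⁹ ε⁻² log² (1/ε)` samples the bound on the total variation distance is at most `ε`. -/
lemma constants {ε N : ℝ} (h0 : 0 < ε) (h1 : ε < 1 / 2)
    (hN : 3000000000 * ε⁻¹ ^ 2 * (Real.log (1 / ε)) ^ 2 ≤ N) :
    6 * Real.exp (-(6 * Real.log (1 / ε)))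
      + √(3 * (6 * Real.log (1 / ε)) * (60 * (80 * (4000 * Real.log (1 / ε)) / N)
        + 20000 * Real.exp (-((4000 * Real.log (1 / ε)) ^ 2 / 160000)))) ≤ ε := by
  have hexp : Real.exp (-Real.log (1 / ε)) = ε := by
    rw [one_div, Real.log_inv, neg_neg, Real.exp_log h0]
  have hl : 1 / 2 ≤ Real.log (1 / ε) := by
    have : Real.log 2 ≤ Real.log (1 / ε) := by
      apply Real.log_le_log (by norm_num)
      rw [le_div_iff₀ h0]; linarith
    linarith [Real.log_two_gt_d9]
  have hlε : Real.log (1 / ε) * ε ≤ 1 := by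
    have := Real.log_le_self (x := 1 / ε) (by positivity)
    rwa [le_div_iff₀ h0] at this
  set l := Real.log (1 / ε) with hldef
  have hl0 : 0 < l := by linarith
  have hNpos : 0 < N := lt_of_lt_of_le (by positivity) hN
  have e1 : Real.exp (-(6 * l)) = ε ^ 6 := by
    rw [← hexp, ← Real.exp_nat_mul]; congr 1; push_cast; ring
  have e2 : Real.exp (-((4000 * l) ^ 2 / 160000)) ≤ ε ^ 40 := by
    have : ε ^ 40 = Real.exp (-(40 * l)) := by
      rw [← hexp, ← Real.exp_nat_mul]; congr 1; push_cast; ring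
    rw [this]
    apply Real.exp_le_exp.2
    nlinarith
  have hpow : ∀ m : ℕ, ε ^ m ≤ (1 / 2) ^ m := fun m => pow_le_pow_left₀ h0.le h1.le m
  have b1 : 6 * Real.exp (-(6 * l)) ≤ ε / 2 := by
    rw [e1]
    have := hpow 5
    norm_num at this
    calc 6 * ε ^ 6 = 6 * ε ^ 5 * ε := by ring
      _ ≤ 6 * (1 / 32) * ε := by gcongr
      _ ≤ ε / 2 := by linarith
  have b2 : √(3 * (6 * l) * (60 * (80 * (4000 * l) / N)
        + 20000 * Real.exp (-((4000 * l) ^ 2 / 160000)))) ≤ ε / 2 := by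
    rw [Real.sqrt_le_left (by positivity)]
    have c1 : 3 * (6 * l) * (60 * (80 * (4000 * l) / N)) ≤ ε ^ 2 / 8 := by
      have : 3 * (6 * l) * (60 * (80 * (4000 * l) / N)) = 345600000 * l ^ 2 / N := by ring
      rw [this, div_le_iff₀ hNpos]
      calc 345600000 * l ^ 2 ≤ 375000000 * l ^ 2 := by gcongr; norm_num
        _ = ε ^ 2 / 8 * (3000000000 * ε⁻¹ ^ 2 * l ^ 2) := by
            field_simp
            norm_num
        _ ≤ _ := by gcongr
    have c2 : 3 * (6 * l) * (20000 * Real.exp (-((4000 * l) ^ 2 / 160000))) ≤ ε ^ 2 / 8 := by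
      calc _ ≤ 3 * (6 * l) * (20000 * ε ^ 40) := by gcongr
        _ = 360000 * ε ^ 2 * (l * ε) * ε ^ 37 := by ring
        _ ≤ 360000 * ε ^ 2 * 1 * (1 / 2) ^ 37 := by
            gcongr
        _ ≤ _ := by
            have : 0 < ε ^ 2 := by positivity
            norm_num
            linarith
    calc _ = 3 * (6 * l) * (60 * (80 * (4000 * l) / N))
          + 3 * (6 * l) * (20000 * Real.exp (-((4000 * l) ^ 2 / 160000))) := by ring
      _ ≤ ε ^ 2 / 8 + ε ^ 2 / 8 := add_le_add c1 c2
      _ = (ε / 2) ^ 2 := by ring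
  linarith

/-- Sample-complexity content of the main theorem: properly learning PBDs with
`O(ε⁻² log²(1/ε))` samples and success probability at least 9/10. -/
theorem proper_learning_pbd_sample_complexity :
    ∃ C : ℝ, 1 ≤ C ∧
      ∀ ε : ℝ, 0 < ε → ε < 1 / 2 →
        ∃ N : ℕ, 0 < N ∧ (N : ℝ) ≤ C * ε⁻¹ ^ 2 * (Real.log (1 / ε)) ^ 2 ∧
          ∀ n : ℕ, 0 < n →
            ∃ A : (Fin N → Fin (n + 1)) → (Fin n → ℝ),
              (∀ x i, A x i ∈ Set.Icc (0 : ℝ) 1) ∧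
              ∀ p : Fin n → ℝ, (∀ i, p i ∈ Set.Icc (0 : ℝ) 1) →
                (9 : ℝ) / 10 ≤
                  ∑ x ∈ Finset.univ.filter
                      (fun x : Fin N → Fin (n + 1) =>
                        dTV (pbdPmf (A x)) (pbdPmf p) ≤ ε),
                    ∏ i, pbdPmf p ((x i : ℕ)) := by
  refine ⟨4000000000, by norm_num, fun ε h0 h1 => ?_⟩
  have hl : 1 / 2 ≤ Real.log (1 / ε) := by
    have : Real.log 2 ≤ Real.log (1 / ε) := by
      apply Real.log_le_log (by norm_num)
      rw [le_div_iff₀ h0]; linarith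
    linarith [Real.log_two_gt_d9]
  have hε : 2 ≤ ε⁻¹ := by
    rw [le_inv_comm₀ (by norm_num) h0]; linarith
  have hX : 1 ≤ ε⁻¹ ^ 2 * (Real.log (1 / ε)) ^ 2 := by
    calc (1 : ℝ) = 2 ^ 2 * (1 / 2) ^ 2 := by norm_num
      _ ≤ _ := by gcongr
  have hlow := Nat.le_ceil (3000000000 * ε⁻¹ ^ 2 * (Real.log (1 / ε)) ^ 2)
  have hupp := Nat.ceil_lt_add_one
    (by positivity : 0 ≤ 3000000000 * ε⁻¹ ^ 2 * (Real.log (1 / ε)) ^ 2)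
  set N := ⌈3000000000 * ε⁻¹ ^ 2 * (Real.log (1 / ε)) ^ 2⌉₊ with hNdef
  have hN640 : 640 ≤ N := by
    have : (640 : ℝ) ≤ N := by linarith
    exact_mod_cast this
  refine ⟨N, by omega, by linarith, fun n _ => ?_⟩
  set B : ℝ := 4000 * Real.log (1 / ε) with hB
  have hB0 : 0 < B := by linarith
  -- The learner outputs any parameter vector compatible with the samples.
  have hA : ∀ x : Fin N → Fin (n + 1), ∃ q : Fin n → ℝ, (∀ i, q i ∈ Set.Icc (0 : ℝ) 1) ∧
      ((∃ p : Fin n → ℝ, (∀ i, p i ∈ Set.Icc (0 : ℝ) 1) ∧ Compatible B (80 * B / N) x p) →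
        Compatible B (80 * B / N) x q) := by
    intro x
    by_cases h : ∃ p : Fin n → ℝ, (∀ i, p i ∈ Set.Icc (0 : ℝ) 1) ∧ Compatible B (80 * B / N) x p
    · obtain ⟨q, hq, hc⟩ := h
      exact ⟨q, hq, fun _ => hc⟩
    · exact ⟨fun _ => 0, fun _ => by simp, fun h' => absurd h' h⟩
  choose A hA01 hAc using hA
  refine ⟨A, hA01, fun p hp => ?_⟩
  refine (compatible_prob hN640 hB0 hp).trans ?_
  refine Finset.sum_le_sum_of_subset_of_nonneg ?_ fun x _ _ => pbdWeight_nonneg hp x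
  intro x hx
  have hcp := (Finset.mem_filter.1 hx).2
  refine Finset.mem_filter.2 ⟨Finset.mem_univ _, ?_⟩
  refine (close_of_compatible hB0 (by positivity)
    (by linarith : 1 ≤ 6 * Real.log (1 / ε)) (by omega) (hA01 x) hp
    (hAc x ⟨p, hp, hcp⟩) hcp).trans ?_
  exact constants h0 h1 hlow
end

section
/- There exists a universal constant C ≥ 1 such that for every positive integer n, every ε ∈ (0,1/2), and every n-PBD P, there exists an n-PBD Q with dTV(P,Q) ≤ ε whose parameter vector takes at most C·log(1/ε) distinct values in [0,1]. -/
/-!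
The parameters are split into sixty groups, one for each interval `[j / 60, (j + 1) / 60]`, and each
group is replaced by one with at most `k + 2` distinct values, where `k = O(log (1 / ε))`. Since the
`ℓ¹` norm of generating functions is submultiplicative, the errors of the groups add up.

Within a group of `n` parameters with mean `c` and `x i = p i - c`, the generating function expands
around the binomial law, `∏ (1 + p i * (X - 1)) = ∑ l, e_l(x) * (X - 1) ^ l * (1 + c * (X - 1)) ^ (n - l)`
with `e_l` the elementary symmetric polynomials (`pgf_eq_sum`).

* Two groups with the same `e_1, …, e_k` differ only in the terms with `l > k`. New parameters in the
  same interval with these `e_l` and at most `k + 2` values exist (`exists_few_values`): take a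
  minimiser of `e_{k+1}`. If `k + 1` of its values were distinct and interior, then adding a small
  constant to the factor of `∏ (X + x i)` belonging to them would keep its roots real and in the
  interval, keep `e_1, …, e_k`, and decrease `e_{k+1}`.
* The terms decay like `2⁻ˡ` (`esy_mul_kraw_le`). Cauchy estimates give
  `e_l(x) ^ 2 ≤ (e * ∑ x i ^ 2 / l) ^ l`, using `∑ x i = 0`, and, through a `χ²` computation for
  binomial laws with complex parameter, `‖(X - 1) ^ l * (1 + c * (X - 1)) ^ (n - l)‖₁ ^ 2 ≤
  (e * l / (n * c * (1 - c))) ^ l`. In an interval of length `1 / 60` the scatter `∑ x i ^ 2` is at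
  most `n * c * (1 - c) / 30`, so the product of the two bounds is at most `4⁻ˡ`.
-/

open scoped Classical

open Polynomial

/-! ### Elementary symmetric polynomials and matching them with few values -/

/-- The `l`-th elementary symmetric polynomial of the values `x i`, `i ∈ s`. -/
noncomputable def esy {ι R : Type*} [CommRing R] (s : Finset ι) (x : ι → R) (l : ℕ) : R :=
  ∑ S ∈ s.powersetCard l, ∏ i ∈ S, x i

theorem prod_add_mul_eq_sum_esy {ι R : Type*} [CommRing R] (s : Finset ι) (x : ι → R) (A B : R) :
    ∏ i ∈ s, (A + x i * B) =
      ∑ l ∈ Finset.range (s.card + 1), esy s x l * (B ^ l * A ^ (s.card - l)) := by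
  simp_rw [add_comm A]
  rw [Finset.prod_add, Finset.sum_powerset]
  refine Finset.sum_congr rfl fun l _ => ?_
  rw [esy, Finset.sum_mul]
  refine Finset.sum_congr rfl fun S hS => ?_
  obtain ⟨hSs, rfl⟩ := Finset.mem_powersetCard.1 hS
  rw [Finset.prod_mul_distrib, Finset.prod_const, Finset.prod_const,
    Finset.card_sdiff_of_subset hSs]
  ring

theorem esy_one {ι R : Type*} [CommRing R] (s : Finset ι) (x : ι → R) :
    esy s x 1 = ∑ i ∈ s, x i := by
  simp [esy, Finset.powersetCard_one]

theorem esy_map {ι R S : Type*} [CommRing R] [CommRing S] (f : R →+* S) (s : Finset ι)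
    (x : ι → R) (l : ℕ) : esy s (fun i => f (x i)) l = f (esy s x l) := by
  simp [esy, map_sum, map_prod]

theorem coeff_prod_X_add_C {ι : Type*} (s : Finset ι) (x : ι → ℝ) {l : ℕ} (hl : l ≤ s.card) :
    (∏ i ∈ s, (X + C (x i))).coeff (s.card - l) = esy s x l := by
  rw [Finset.prod_X_add_C_coeff _ _ (Nat.sub_le _ _), esy, Nat.sub_sub_self hl]

/-- The monic polynomial `∏ (X + y i)` has simple real roots, so it keeps as many real roots, close
to the original ones, after adding a small constant `σ`, which may be taken negative. -/
theorem exists_perturbed_roots {ι : Type*} (T : Finset ι) (hT : T.Nonempty) (y : ι → ℝ)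
    (a b : ℝ) (hinj : Set.InjOn y T) (hy : ∀ i ∈ T, y i ∈ Set.Ioo a b) :
    ∃ σ < 0, ∃ z : ι → ℝ, (∀ i ∈ T, z i ∈ Set.Ioo a b) ∧
      ∏ i ∈ T, (X + C (z i)) = ∏ i ∈ T, (X + C (y i)) + C σ := by
  set u : ℝ[X] := ∏ i ∈ T, (X + C (y i)) with hu
  obtain ⟨U, hU, hdisj⟩ := (T.image y).finite_toSet.t2_separation
  have hmem : ∀ i ∈ T, ∀ᶠ σ in nhds (0 : ℝ),
      ∃ t, -t ∈ Set.Ioo a b ∩ U (y i) ∧ u.eval t = -σ := by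
    intro i hi
    have hfac : u = (X + C (y i)) * ∏ j ∈ T.erase i, (X + C (y j)) :=
      (Finset.mul_prod_erase T _ hi).symm
    have hroot : u.eval (-y i) = 0 := by simp [hfac]
    have hder : u.derivative.eval (-y i) ≠ 0 := by
      rw [hfac, derivative_mul]
      simp only [eval_add, eval_mul, derivative_add, derivative_X, derivative_C, eval_X, eval_C,
        neg_add_cancel, zero_mul, add_zero, one_mul, eval_prod]
      refine Finset.prod_ne_zero_iff.2 fun j hj h0 => ?_
      have hj' := Finset.mem_erase.1 hj
      exact hj'.1 (hinj hj'.2 hi (by linarith))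
    have hmap := (u.hasStrictDerivAt (-y i)).map_nhds_eq hder
    rw [hroot] at hmap
    have hV : {t : ℝ | -t ∈ Set.Ioo a b ∩ U (y i)} ∈ nhds (-y i) := by
      have : Set.Ioo a b ∩ U (y i) ∈ nhds (- -y i) := by
        rw [neg_neg]
        exact (isOpen_Ioo.inter (hU _).2).mem_nhds ⟨hy i hi, (hU _).1⟩
      exact continuous_neg.continuousAt.preimage_mem_nhds this
    have himg := Filter.image_mem_map (m := fun t => u.eval t) hV
    rw [hmap] at himg
    have hneg : Filter.Tendsto (fun σ : ℝ => -σ) (nhds 0) (nhds 0) := by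
      simpa using (continuous_neg (G := ℝ)).tendsto 0
    filter_upwards [hneg himg] with σ hσ
    obtain ⟨t, ht, h⟩ := hσ
    exact ⟨t, ht, h⟩
  have hall := (Filter.eventually_all_finset T).2 hmem
  obtain ⟨σ, hσ, hσ0⟩ :=
    ((hall.filter_mono (nhdsWithin_le_nhds (s := Set.Iio 0))).and self_mem_nhdsWithin).exists
  choose! t ht using hσ
  refine ⟨σ, hσ0, fun i => -t i, fun i hi => (ht i hi).1.1, ?_⟩
  have hu_monic : u.Monic := monic_prod_of_monic _ _ fun i _ => monic_X_add_C _
  have hu_deg : u.degree = T.card := by simp [hu, degree_prod]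
  have hCσ : (C σ : ℝ[X]).degree < u.degree := by
    rw [hu_deg]
    refine degree_C_le.trans_lt ?_
    exact_mod_cast hT.card_pos
  have hv_monic : (∏ i ∈ T, (X + C (-t i))).Monic :=
    monic_prod_of_monic _ _ fun i _ => monic_X_add_C _
  have hv_deg : (∏ i ∈ T, (X + C (-t i))).degree = (T.card : WithBot ℕ) := by
    rw [degree_prod, Finset.sum_congr rfl fun i _ => degree_X_add_C (-t i)]
    simp
  refine eq_of_degree_sub_lt_of_eval_index_eq (v := t) T ?_ ?_ ?_
  · intro i hi j hj hij
    by_contra hne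
    have := hdisj (Finset.mem_coe.2 (Finset.mem_image_of_mem y hi))
      (Finset.mem_coe.2 (Finset.mem_image_of_mem y hj)) (fun h => hne (hinj hi hj h))
    refine Set.disjoint_left.1 this (ht i hi).1.2 ?_
    rw [hij]
    exact (ht j hj).1.2
  · rw [← hv_deg]
    refine degree_sub_lt_left ?_ hv_monic.ne_zero ?_
    · rw [degree_add_eq_left_of_degree_lt hCσ, hu_deg, hv_deg]
    · rw [hv_monic.leadingCoeff, leadingCoeff_add_of_degree_lt' hCσ, hu_monic.leadingCoeff]
  · intro i hi
    rw [eval_add, (ht i hi).2, eval_C, neg_add_cancel, eval_prod]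
    exact Finset.prod_eq_zero hi (by simp)

/-- The first `k` elementary symmetric polynomials of any points of `[a, b]` are also attained by
points of `[a, b]` with at most `k + 2` distinct values: a minimiser of the `(k + 1)`-st elementary
symmetric polynomial under these constraints has at most `k` values in the open interval, since
perturbing `k + 1` of them by `exists_perturbed_roots` would decrease it further. -/
theorem exists_few_values {ι : Type*} [Fintype ι] (s : Finset ι) (x : ι → ℝ) {a b : ℝ}
    (hab : a ≤ b) (hx : ∀ i ∈ s, x i ∈ Set.Icc a b) (k : ℕ) :
    ∃ y : ι → ℝ, (∀ i ∈ s, y i ∈ Set.Icc a b) ∧ (∀ l ≤ k, esy s y l = esy s x l) ∧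
      (s.image y).card ≤ k + 2 := by
  have hcont : ∀ l, Continuous fun y : ι → ℝ => esy s y l := by
    intro l; unfold esy; fun_prop
  set K : Set (ι → ℝ) := Set.Icc (fun _ => a) (fun _ => b) ∩
    {y | ∀ l ≤ k, esy s y l = esy s x l} with hK
  have hKc : IsCompact K := by
    refine isCompact_Icc.inter_right ?_
    simp only [Set.ofPred_forall]
    exact isClosed_iInter fun l => isClosed_iInter fun _ => isClosed_eq (hcont l) continuous_const
  have hKne : K.Nonempty := by
    refine ⟨fun i => if i ∈ s then x i else a, ⟨fun i => ?_, fun i => ?_⟩, fun l _ => ?_⟩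
    · by_cases hi : i ∈ s
      · simpa [hi] using (hx i hi).1
      · simp [hi]
    · by_cases hi : i ∈ s
      · simpa [hi] using (hx i hi).2
      · simpa [hi] using hab
    · unfold esy
      refine Finset.sum_congr rfl fun S hS => Finset.prod_congr rfl fun i hi => ?_
      exact if_pos ((Finset.mem_powersetCard.1 hS).1 hi)
  obtain ⟨y, hyK, hmin⟩ := hKc.exists_isMinOn hKne (hcont (k + 1)).continuousOn
  have hyI : ∀ i, y i ∈ Set.Icc a b := fun i => ⟨hyK.1.1 i, hyK.1.2 i⟩
  refine ⟨y, fun i _ => hyI i, hyK.2, ?_⟩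
  by_contra! hcard
  have hinner : k + 1 ≤ (((s.image y).erase a).erase b).card := by
    have h1 := Finset.pred_card_le_card_erase (s := s.image y) (a := a)
    have h2 := Finset.pred_card_le_card_erase (s := (s.image y).erase a) (a := b)
    omega
  obtain ⟨R, hR, hRc⟩ := Finset.exists_subset_card_eq hinner
  have hpre : ∀ r ∈ R, ∃ i ∈ s, y i = r := fun r hr => by
    have := Finset.mem_of_mem_erase (Finset.mem_of_mem_erase (hR hr))
    simpa using this
  have : Nonempty ι := by
    obtain ⟨r, hr⟩ := Finset.card_pos.1 (show 0 < (s.image y).card by omega)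
    obtain ⟨i, -, -⟩ := Finset.mem_image.1 hr
    exact ⟨i⟩
  choose! g hgs hgy using hpre
  set T := R.image g with hT
  have hTs : T ⊆ s := by
    intro i hi
    obtain ⟨r, hr, rfl⟩ := Finset.mem_image.1 hi
    exact hgs r hr
  have hTinj : Set.InjOn y T := by
    intro i hi j hj hij
    obtain ⟨r, hr, rfl⟩ := Finset.mem_image.1 hi
    obtain ⟨r', hr', rfl⟩ := Finset.mem_image.1 hj
    rw [hgy r hr, hgy r' hr'] at hij
    rw [hij]
  have hTcard : T.card = k + 1 := by
    rw [hT, Finset.card_image_of_injOn, hRc]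
    intro r hr r' hr' h
    rw [← hgy r hr, ← hgy r' hr', h]
  have hTIoo : ∀ i ∈ T, y i ∈ Set.Ioo a b := by
    intro i hi
    obtain ⟨r, hr, rfl⟩ := Finset.mem_image.1 hi
    have hr2 := Finset.mem_erase.1 (hR hr)
    have hr3 := Finset.mem_erase.1 hr2.2
    have := hyI (g r)
    rw [hgy r hr] at this ⊢
    exact ⟨lt_of_le_of_ne this.1 (Ne.symm hr3.1), lt_of_le_of_ne this.2 hr2.1⟩
  obtain ⟨σ, hσ, z, hz, hprod⟩ := exists_perturbed_roots T
    (Finset.card_pos.1 (by omega)) y a b hTinj hTIoo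
  set z' : ι → ℝ := fun i => if i ∈ T then z i else y i with hz_def
  -- Only coefficients of degree at most `s.card - (k + 1)` change, the top one by exactly `σ`.
  have hkey : ∏ i ∈ s, (X + C (z' i)) =
      ∏ i ∈ s, (X + C (y i)) + C σ * ∏ i ∈ s \ T, (X + C (y i)) := by
    rw [← Finset.prod_sdiff hTs, ← Finset.prod_sdiff hTs (f := fun i => X + C (y i))]
    have h1 : ∏ i ∈ s \ T, (X + C (z' i)) = ∏ i ∈ s \ T, (X + C (y i)) :=
      Finset.prod_congr rfl fun i hi => by simp [hz_def, (Finset.mem_sdiff.1 hi).2]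
    have h2 : ∏ i ∈ T, (X + C (z' i)) = ∏ i ∈ T, (X + C (z i)) :=
      Finset.prod_congr rfl fun i hi => by simp [hz_def, hi]
    rw [h1, h2, hprod]
    ring
  have hle := Finset.card_le_card hTs
  have hmon : (∏ i ∈ s \ T, (X + C (y i))).Monic :=
    monic_prod_of_monic _ _ fun i _ => monic_X_add_C _
  have hdeg : (∏ i ∈ s \ T, (X + C (y i))).natDegree = s.card - (k + 1) := by
    rw [natDegree_prod_of_monic _ _ fun i _ => monic_X_add_C _]
    simp [Finset.card_sdiff_of_subset hTs, hTcard]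
  have hesy : ∀ l ≤ k + 1, esy s z' l =
      esy s y l + σ * (∏ i ∈ s \ T, (X + C (y i))).coeff (s.card - l) := by
    intro l hl
    rw [← coeff_prod_X_add_C s z' (by omega), hkey, coeff_add, coeff_C_mul,
      coeff_prod_X_add_C s y (by omega)]
  have hz'K : z' ∈ K := by
    have hI : ∀ i, z' i ∈ Set.Icc a b := by
      intro i
      by_cases hi : i ∈ T
      · simpa [hz_def, hi] using Set.Ioo_subset_Icc_self (hz i hi)
      · simpa [hz_def, hi] using hyI i
    refine ⟨⟨fun i => (hI i).1, fun i => (hI i).2⟩, fun l hl => ?_⟩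
    rw [hesy l (by omega), coeff_eq_zero_of_natDegree_lt (by omega), mul_zero, add_zero]
    exact hyK.2 l hl
  have h1 : esy s y (k + 1) ≤ esy s z' (k + 1) := hmin hz'K
  rw [hesy _ le_rfl, ← hdeg, hmon.coeff_natDegree] at h1
  linarith

/-! ### Cauchy estimate on a circle -/

/-- Cauchy estimate in the `ℓ¹` norm for a finite family of polynomials `∑ a j l * t ^ l` of degree
below `N`: a bound valid at every point of the circle of radius `ρ` passes to the coefficients of
`t ^ l`. The circle mean is replaced by the mean over the `N`-th roots of unity. -/
theorem coeff_bound_of_circle_bound {J : Type*} (s : Finset J) (N : ℕ) (a : J → ℕ → ℂ) {ρ M : ℝ}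
    (hρ : 0 ≤ ρ)
    (hM : ∀ t : ℂ, ‖t‖ = ρ → ∑ j ∈ s, ‖∑ l ∈ Finset.range N, a j l * t ^ l‖ ≤ M)
    {l : ℕ} (hl : l < N) : (∑ j ∈ s, ‖a j l‖) * ρ ^ l ≤ M := by
  have hN : N ≠ 0 := by omega
  have hN0 : (0 : ℝ) < N := by positivity
  set ω : ℂ := Complex.exp (2 * Real.pi * Complex.I / N) with hω
  have hprim : IsPrimitiveRoot ω N := Complex.isPrimitiveRoot_exp N hN
  have hnorm : ‖ω‖ = 1 := hprim.norm'_eq_one hN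
  have hgeom : ∀ i < N, ∑ m ∈ Finset.range N, (ω ^ m) ^ (N - l) * (ω ^ m) ^ i
      = if i = l then (N : ℂ) else 0 := by
    intro i hi
    have h1 : ∀ m, (ω ^ m) ^ (N - l) * (ω ^ m) ^ i = (ω ^ (N - l + i)) ^ m := by
      intro m; rw [← pow_add, ← pow_mul, ← pow_mul, mul_comm]
    simp_rw [h1]
    by_cases h : i = l
    · subst h
      rw [Nat.sub_add_cancel hi.le, hprim.pow_eq_one]
      simp
    · rw [if_neg h]
      have hne : ω ^ (N - l + i) ≠ 1 := by
        intro h2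
        obtain ⟨c, hc⟩ := (hprim.pow_eq_one_iff_dvd _).1 h2
        have hc2 : c < 2 := by
          by_contra! h3
          have := Nat.mul_le_mul_left N h3
          omega
        interval_cases c <;> omega
      rw [geom_sum_eq hne, ← pow_mul, mul_comm, pow_mul, hprim.pow_eq_one, one_pow, sub_self,
        zero_div]
  have hextract : ∀ j, ∑ m ∈ Finset.range N, (ω ^ m) ^ (N - l) *
      ∑ i ∈ Finset.range N, a j i * ((ρ : ℂ) * ω ^ m) ^ i = N * (a j l * (ρ : ℂ) ^ l) := by
    intro j
    simp_rw [Finset.mul_sum]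
    rw [Finset.sum_comm]
    have : ∀ i ∈ Finset.range N, ∑ m ∈ Finset.range N,
        (ω ^ m) ^ (N - l) * (a j i * ((ρ : ℂ) * ω ^ m) ^ i) =
        if i = l then N * (a j l * (ρ : ℂ) ^ l) else 0 := by
      intro i hi
      have h2 : ∀ m, (ω ^ m) ^ (N - l) * (a j i * ((ρ : ℂ) * ω ^ m) ^ i) =
          (a j i * (ρ : ℂ) ^ i) * ((ω ^ m) ^ (N - l) * (ω ^ m) ^ i) := by
        intro m; rw [mul_pow]; ring
      simp_rw [h2]
      rw [← Finset.mul_sum, hgeom i (Finset.mem_range.1 hi)]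
      split_ifs with h
      · subst h; ring
      · simp
    rw [Finset.sum_congr rfl this]
    simp [hl]
  have hj : ∀ j, (N : ℝ) * (‖a j l‖ * ρ ^ l) ≤
      ∑ m ∈ Finset.range N, ‖∑ i ∈ Finset.range N, a j i * ((ρ : ℂ) * ω ^ m) ^ i‖ := by
    intro j
    have h3 : (N : ℝ) * (‖a j l‖ * ρ ^ l) = ‖(N : ℂ) * (a j l * (ρ : ℂ) ^ l)‖ := by
      simp [abs_of_nonneg hρ]
    rw [h3, ← hextract j]
    refine (norm_sum_le _ _).trans (Finset.sum_le_sum fun m _ => ?_)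
    rw [norm_mul, norm_pow, norm_pow, hnorm]
    simp
  have hsum : (N : ℝ) * ((∑ j ∈ s, ‖a j l‖) * ρ ^ l) ≤ N * M := by
    calc (N : ℝ) * ((∑ j ∈ s, ‖a j l‖) * ρ ^ l) = ∑ j ∈ s, (N : ℝ) * (‖a j l‖ * ρ ^ l) := by
          rw [Finset.sum_mul, Finset.mul_sum]
      _ ≤ ∑ j ∈ s, ∑ m ∈ Finset.range N,
            ‖∑ i ∈ Finset.range N, a j i * ((ρ : ℂ) * ω ^ m) ^ i‖ :=
          Finset.sum_le_sum fun j _ => hj j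
      _ = ∑ m ∈ Finset.range N, ∑ j ∈ s,
            ‖∑ i ∈ Finset.range N, a j i * ((ρ : ℂ) * ω ^ m) ^ i‖ := Finset.sum_comm
      _ ≤ ∑ m ∈ Finset.range N, M := Finset.sum_le_sum fun m _ => hM _ (by
          simp [hnorm, abs_of_nonneg hρ])
      _ = N * M := by simp
  exact le_of_mul_le_mul_left hsum hN0

/-! ### The `ℓ¹` norm of polynomials -/

/-- The `ℓ¹` norm of the coefficient sequence of a real polynomial. -/
noncomputable def l1 (f : ℝ[X]) : ℝ := ∑ j ∈ f.support, |f.coeff j|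

theorem l1_eq_sum_range (f : ℝ[X]) {N : ℕ} (hN : f.natDegree < N) :
    l1 f = ∑ j ∈ Finset.range N, |f.coeff j| := by
  refine Finset.sum_subset (fun j hj => ?_) fun j _ hj => ?_
  · exact Finset.mem_range.2 ((le_natDegree_of_mem_supp j hj).trans_lt hN)
  · simpa using hj

theorem l1_nonneg (f : ℝ[X]) : 0 ≤ l1 f := Finset.sum_nonneg fun _ _ => abs_nonneg _

theorem l1_zero : l1 0 = 0 := by simp [l1]

theorem l1_add_le (f g : ℝ[X]) : l1 (f + g) ≤ l1 f + l1 g := by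
  have hN := natDegree_add_le f g
  rw [l1_eq_sum_range f (N := max f.natDegree g.natDegree + 1) (by omega),
    l1_eq_sum_range g (N := max f.natDegree g.natDegree + 1) (by omega),
    l1_eq_sum_range (f + g) (N := max f.natDegree g.natDegree + 1) (by omega),
    ← Finset.sum_add_distrib]
  exact Finset.sum_le_sum fun j _ => by rw [coeff_add]; exact abs_add_le _ _

theorem l1_sum_le {J : Type*} (s : Finset J) (f : J → ℝ[X]) :
    l1 (∑ j ∈ s, f j) ≤ ∑ j ∈ s, l1 (f j) := by
  classical
  induction s using Finset.induction_on with
  | empty => simp [l1_zero]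
  | insert j s hj ih =>
    rw [Finset.sum_insert hj, Finset.sum_insert hj]
    exact (l1_add_le _ _).trans (by gcongr)

theorem l1_C_mul (c : ℝ) (f : ℝ[X]) : l1 (C c * f) = |c| * l1 f := by
  rw [l1_eq_sum_range (C c * f) (N := f.natDegree + 1)
    (Nat.lt_succ_of_le (natDegree_C_mul_le _ _)), l1_eq_sum_range f (Nat.lt_succ_self _),
    Finset.mul_sum]
  simp [abs_mul]

theorem l1_mul_X_pow (f : ℝ[X]) (m : ℕ) : l1 (f * X ^ m) ≤ l1 f := by
  rw [l1_eq_sum_range (f * X ^ m) (N := m + (f.natDegree + 1)), Finset.sum_range_add,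
    l1_eq_sum_range f (Nat.lt_succ_self _)]
  · have h0 : ∑ j ∈ Finset.range m, |(f * X ^ m).coeff j| = 0 :=
      Finset.sum_eq_zero fun j hj => by
        rw [coeff_mul_X_pow', if_neg (by simpa using hj), abs_zero]
    rw [h0, zero_add]
    refine le_of_eq (Finset.sum_congr rfl fun j _ => ?_)
    rw [add_comm, coeff_mul_X_pow]
  · have := natDegree_mul_le (p := f) (q := X ^ m)
    rw [natDegree_X_pow] at this
    omega

theorem l1_mul_le (f g : ℝ[X]) : l1 (f * g) ≤ l1 f * l1 g := by
  conv_lhs => rw [f.as_sum_support_C_mul_X_pow, Finset.sum_mul]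
  refine (l1_sum_le _ _).trans ?_
  conv_rhs => rw [l1, Finset.sum_mul]
  refine Finset.sum_le_sum fun j _ => ?_
  rw [mul_assoc, l1_C_mul, mul_comm (X ^ j)]
  exact mul_le_mul_of_nonneg_left (l1_mul_X_pow _ _) (abs_nonneg _)

theorem l1_prod_le_one {J : Type*} (s : Finset J) (f : J → ℝ[X]) (hf : ∀ j ∈ s, l1 (f j) ≤ 1) :
    l1 (∏ j ∈ s, f j) ≤ 1 := by
  classical
  induction s using Finset.induction_on with
  | empty => rw [Finset.prod_empty, l1_eq_sum_range (1 : ℝ[X]) (N := 1) (by simp)]; simp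
  | insert j s hj ih =>
    rw [Finset.prod_insert hj]
    exact (l1_mul_le _ _).trans (mul_le_one₀ (hf j (by simp)) (l1_nonneg _)
      (ih fun i hi => hf i (by simp [hi])))

theorem l1_prod_sub_prod_le {J : Type*} (s : Finset J) (f g : J → ℝ[X])
    (hf : ∀ j ∈ s, l1 (f j) ≤ 1) (hg : ∀ j ∈ s, l1 (g j) ≤ 1) :
    l1 (∏ j ∈ s, f j - ∏ j ∈ s, g j) ≤ ∑ j ∈ s, l1 (f j - g j) := by
  classical
  induction s using Finset.induction_on with
  | empty => simp [l1_zero]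
  | insert j s hj ih =>
    rw [Finset.prod_insert hj, Finset.prod_insert hj, Finset.sum_insert hj]
    have h : f j * ∏ i ∈ s, f i - g j * ∏ i ∈ s, g i =
        (f j - g j) * ∏ i ∈ s, f i + g j * (∏ i ∈ s, f i - ∏ i ∈ s, g i) := by ring
    rw [h]
    refine (l1_add_le _ _).trans (add_le_add ?_ ?_)
    · exact (l1_mul_le _ _).trans (mul_le_of_le_one_right (l1_nonneg _)
        (l1_prod_le_one _ _ fun i hi => hf i (by simp [hi])))
    · refine (l1_mul_le _ _).trans ((mul_le_of_le_one_left (l1_nonneg _) (hg j (by simp))).trans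
        (ih (fun i hi => hf i (by simp [hi])) fun i hi => hg i (by simp [hi])))

/-- The bound `(n / l) ^ l ≤ n.choose l`, cleared of denominators. -/
theorem pow_le_choose_mul_pow : ∀ (l n : ℕ), l ≤ n → n ^ l ≤ n.choose l * l ^ l
  | 0, n, _ => by simp
  | j + 1, 0, h => by omega
  | j + 1, m + 1, h => by
    have hjm : j ≤ m := by omega
    have ih := pow_le_choose_mul_pow j m hjm
    have h1 : (m + 1) ^ j ≤ m.choose j * (j + 1) ^ j := by
      rcases Nat.eq_zero_or_pos j with rfl | hj
      · simp
      · have h2 : (m + 1) * j ≤ m * (j + 1) := by nlinarith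
        have h3 := Nat.pow_le_pow_left h2 j
        rw [mul_pow, mul_pow] at h3
        have h4 : (m + 1) ^ j * j ^ j ≤ (m.choose j * (j + 1) ^ j) * j ^ j :=
          h3.trans ((Nat.mul_le_mul_right _ ih).trans (le_of_eq (by ring)))
        exact Nat.le_of_mul_le_mul_right h4 (by positivity)
    have h5 := Nat.add_one_mul_choose_eq m j
    calc (m + 1) ^ (j + 1) = (m + 1) * (m + 1) ^ j := by ring
      _ ≤ (m + 1) * (m.choose j * (j + 1) ^ j) := Nat.mul_le_mul_left _ h1
      _ = ((m + 1) * m.choose j) * (j + 1) ^ j := by ring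
      _ = (m + 1).choose (j + 1) * (j + 1) ^ (j + 1) := by rw [h5]; ring

/-! ### Bounds on the two factors of the binomial expansion -/

/-- For centred `x`, the generating function `∏ (1 + x i * t)` has modulus at most
`exp (|t| ^ 2 * ∑ x i ^ 2 / 2)`, which bounds its coefficients by the Cauchy estimate. -/
theorem esy_sq_mul_pow_le {ι : Type*} (s : Finset ι) (x : ι → ℝ) (hx : ∑ i ∈ s, x i = 0)
    {l : ℕ} (hl : l ≤ s.card) {r : ℝ} (hr : 0 ≤ r) :
    esy s x l ^ 2 * r ^ l ≤ Real.exp (r * ∑ i ∈ s, x i ^ 2) := by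
  have hfac : ∀ (t : ℂ) (y : ℝ), ‖t‖ = √r →
      ‖1 + (y : ℂ) * t‖ ≤ Real.exp (y * t.re + y ^ 2 * r / 2) := by
    intro t y ht
    refine le_of_sq_le_sq ?_ (Real.exp_pos _).le
    have h1 : ‖1 + (y : ℂ) * t‖ ^ 2 = 2 * (y * t.re + y ^ 2 * r / 2) + 1 := by
      have h2 : ‖t‖ ^ 2 = r := by rw [ht, Real.sq_sqrt hr]
      rw [Complex.sq_norm, Complex.normSq_apply] at h2 ⊢
      simp only [Complex.add_re, Complex.one_re, Complex.re_ofReal_mul, Complex.add_im,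
        Complex.one_im, Complex.im_ofReal_mul]
      rw [← h2]; ring
    rw [h1, ← Real.exp_nat_mul]
    exact Real.add_one_le_exp _
  have key := coeff_bound_of_circle_bound (Finset.univ : Finset Unit) (s.card + 1)
    (fun _ l => ((esy s x l : ℝ) : ℂ)) (ρ := √r)
    (M := Real.exp (r * (∑ i ∈ s, x i ^ 2) / 2)) (Real.sqrt_nonneg r) ?_ (l := l) (by omega)
  · simp only [Finset.univ_unique, Finset.sum_singleton, Complex.norm_real, Real.norm_eq_abs]
      at key
    have h := pow_le_pow_left₀ (by positivity) key 2
    rw [mul_pow, sq_abs, ← pow_mul, mul_comm l 2, pow_mul, Real.sq_sqrt hr,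
      ← Real.exp_nat_mul] at h
    refine h.trans (le_of_eq ?_)
    congr 1
    push_cast
    ring
  · intro t ht
    simp only [Finset.univ_unique, Finset.sum_singleton]
    have h1 := prod_add_mul_eq_sum_esy s (fun i => (x i : ℂ)) 1 t
    have h2 : ∀ l, esy s (fun i => (x i : ℂ)) l = ((esy s x l : ℝ) : ℂ) :=
      fun l => esy_map Complex.ofRealHom s x l
    simp only [h2, one_pow, mul_one] at h1
    rw [← h1, norm_prod]
    refine (Finset.prod_le_prod (fun _ _ => norm_nonneg _) fun i _ => hfac t (x i) ht).trans ?_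
    rw [← Real.exp_sum, Finset.sum_add_distrib, ← Finset.sum_mul, hx, ← Finset.sum_div,
      ← Finset.sum_mul]
    exact le_of_eq (by ring_nf)

/-- The polynomial `(X - 1) ^ l * (1 + c * (X - 1)) ^ (n - l)`: the `l`-th finite difference of the
`Binomial(n - l, c)` distribution, i.e. a Krawtchouk function times the `Binomial(n, c)` weight. -/
noncomputable def kraw (n : ℕ) (c : ℝ) (l : ℕ) : ℝ[X] :=
  (X - 1) ^ l * (1 + C c * (X - 1)) ^ (n - l)

theorem natDegree_kraw_le {n l : ℕ} (c : ℝ) (hl : l ≤ n) : (kraw n c l).natDegree ≤ n := by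
  have h1 : (X - 1 : ℝ[X]).natDegree ≤ 1 := by
    simpa using (natDegree_X_sub_C (1 : ℝ)).le
  have h2 : (1 + C c * (X - 1) : ℝ[X]).natDegree ≤ 1 := by
    refine (natDegree_add_le _ _).trans ?_
    simpa using (natDegree_C_mul_le _ _).trans h1
  have := natDegree_mul_le_of_le (natDegree_pow_le_of_le l h1) (natDegree_pow_le_of_le (n - l) h2)
  exact this.trans (by omega)

/-- The polynomials `n.choose l • kraw n c l` are the Taylor coefficients in `t` of the generating
function of `Binomial(n, c + t)`, for complex `t`. -/
theorem sum_choose_kraw_coeff (n : ℕ) (c : ℝ) (t : ℂ) (j : ℕ) :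
    ∑ l ∈ Finset.range (n + 1), ((n.choose l * (kraw n c l).coeff j : ℝ) : ℂ) * t ^ l =
      (c + t) ^ j * (1 - c - t) ^ (n - j) * n.choose j := by
  have h1 : ((C t * (X - 1) + (1 + C (c : ℂ) * (X - 1))) ^ n : ℂ[X]) =
      (C (c + t) * X + C (1 - c - t)) ^ n := by
    congr 1
    simp only [map_add, map_sub, map_one]
    ring
  rw [add_pow, add_pow (C ((c : ℂ) + t) * X)] at h1
  have h2 := congrArg (fun f => coeff f j) h1
  simp only [finsetSum_coeff] at h2
  have hL : ∀ l, (((C t * (X - 1)) ^ l * (1 + C (c : ℂ) * (X - 1)) ^ (n - l) *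
      (n.choose l : ℂ[X])).coeff j) = ((n.choose l * (kraw n c l).coeff j : ℝ) : ℂ) * t ^ l := by
    intro l
    have h3 : (((C t * (X - 1)) ^ l * (1 + C (c : ℂ) * (X - 1)) ^ (n - l) *
      (n.choose l : ℂ[X]))) = C (n.choose l * t ^ l) * (kraw n c l).map Complex.ofRealHom := by
      simp [kraw, mul_pow]
      ring
    rw [h3, coeff_C_mul, coeff_map]
    push_cast
    simp
    ring
  have hR : ∀ i, (((C ((c : ℂ) + t) * X) ^ i * C (1 - c - t) ^ (n - i) *
      (n.choose i : ℂ[X])).coeff j) =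
      if j = i then (c + t) ^ i * (1 - c - t) ^ (n - i) * n.choose i else 0 := by
    intro i
    have h3 : ((C ((c : ℂ) + t) * X) ^ i * C (1 - c - t) ^ (n - i) *
      (n.choose i : ℂ[X])) = C ((c + t) ^ i * (1 - c - t) ^ (n - i) * n.choose i) * X ^ i := by
      simp [mul_pow]
      ring
    rw [h3, coeff_C_mul_X_pow]
  simp only [hL, hR] at h2
  rw [h2, Finset.sum_ite_eq]
  split_ifs with h
  · rfl
  · rw [Nat.choose_eq_zero_of_lt (by simpa using h)]
    simp

/-- The signed binomial weights with complex parameter `c + t` have squared `χ²`-norm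
`(1 + |t| ^ 2 / (c * (1 - c))) ^ n` relative to `Binomial(n, c)`; Cauchy–Schwarz turns this into an
`ℓ¹` bound on the circle `|t| ^ 2 = r`, and the Cauchy estimate extracts the `l`-th term. -/
theorem kraw_sq_mul_pow_le {n l : ℕ} (hl : l ≤ n) {c : ℝ} (hc0 : 0 < c) (hc1 : c < 1) {r : ℝ}
    (hr : 0 ≤ r) :
    (n.choose l * l1 (kraw n c l)) ^ 2 * r ^ l ≤ Real.exp (n * (r / (c * (1 - c)))) := by
  have hd : 0 < 1 - c := by linarith
  have key := coeff_bound_of_circle_bound (Finset.range (n + 1)) (n + 1)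
    (fun j l => ((n.choose l * (kraw n c l).coeff j : ℝ) : ℂ)) (ρ := √r)
    (M := Real.exp (n * (r / (c * (1 - c))) / 2)) (Real.sqrt_nonneg r) ?_ (l := l) (by omega)
  · have hsum : ∑ j ∈ Finset.range (n + 1), ‖((n.choose l * (kraw n c l).coeff j : ℝ) : ℂ)‖ =
        n.choose l * l1 (kraw n c l) := by
      rw [l1_eq_sum_range _ (Nat.lt_succ_of_le (natDegree_kraw_le c hl)), Finset.mul_sum]
      refine Finset.sum_congr rfl fun j _ => ?_
      rw [Complex.norm_real, Real.norm_eq_abs, abs_mul, Nat.abs_cast]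
    rw [hsum] at key
    have h := pow_le_pow_left₀ (mul_nonneg (mul_nonneg (Nat.cast_nonneg _) (l1_nonneg _))
      (by positivity)) key 2
    rw [mul_pow, ← pow_mul, mul_comm l 2, pow_mul, Real.sq_sqrt hr,
      ← Real.exp_nat_mul] at h
    refine h.trans (le_of_eq ?_)
    congr 1
    push_cast
    ring
  · intro t ht
    simp only [sum_choose_kraw_coeff]
    refine le_of_sq_le_sq ?_ (Real.exp_pos _).le
    have hCS := Finset.sum_sq_le_sum_mul_sum_of_sq_le_mul (Finset.range (n + 1))
      (r := fun j => ‖((c : ℂ) + t) ^ j * (1 - c - t) ^ (n - j) * n.choose j‖)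
      (f := fun j => c ^ j * (1 - c) ^ (n - j) * n.choose j)
      (g := fun j => (‖(c : ℂ) + t‖ ^ 2 / c) ^ j * (‖(1 - c - t : ℂ)‖ ^ 2 / (1 - c)) ^ (n - j)
        * n.choose j)
      (fun j _ => by positivity) (fun j _ => by positivity) (fun j _ => by
        refine le_of_eq ?_
        simp only [norm_mul, norm_pow, Complex.norm_natCast, div_pow]
        field_simp
        ring)
    rw [← add_pow, ← add_pow] at hCS
    have ht2 : ‖t‖ ^ 2 = r := by rw [ht, Real.sq_sqrt hr]
    have hid : ‖(c : ℂ) + t‖ ^ 2 / c + ‖(1 - c - t : ℂ)‖ ^ 2 / (1 - c) =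
        r / (c * (1 - c)) + 1 := by
      rw [← ht2]
      simp only [Complex.sq_norm, Complex.normSq_apply, Complex.add_re, Complex.sub_re,
        Complex.add_im, Complex.sub_im, Complex.ofReal_re, Complex.ofReal_im, Complex.one_re,
        Complex.one_im]
      field_simp
      ring
    rw [hid, add_sub_cancel, one_pow, one_mul] at hCS
    refine hCS.trans ?_
    rw [← Real.exp_nat_mul]
    refine (pow_le_pow_left₀ (by positivity) (Real.add_one_le_exp _) n).trans ?_
    rw [← Real.exp_nat_mul]
    refine le_of_eq ?_
    congr 1
    push_cast
    ring

/-- Each term of order `l` of the binomial expansion decays geometrically when the parameters are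
concentrated: their scatter is at most a thirtieth of the binomial variance. -/
theorem esy_mul_kraw_le {ι : Type*} (s : Finset ι) (x : ι → ℝ) (hx : ∑ i ∈ s, x i = 0) {c : ℝ}
    (hc0 : 0 ≤ c) (hc1 : c ≤ 1)
    (hV : ∑ i ∈ s, x i ^ 2 ≤ s.card * (c * (1 - c)) / 30) {l : ℕ} (hl0 : 0 < l)
    (hl : l ≤ s.card) :
    |esy s x l| * l1 (kraw s.card c l) ≤ (1 / 2) ^ l := by
  have hn : 0 < s.card := by omega
  have hnR : (0 : ℝ) < s.card := by exact_mod_cast hn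
  have hlR : (0 : ℝ) < l := by exact_mod_cast hl0
  rcases (mul_nonneg hc0 (sub_nonneg.2 hc1)).eq_or_lt with hcc | hcc
  · have hx0 : ∀ i ∈ s, x i = 0 := by
      intro i hi
      have h1 := Finset.single_le_sum (fun i _ => sq_nonneg (x i)) hi
      rw [← hcc] at hV
      have : x i ^ 2 = 0 := le_antisymm (by linarith) (sq_nonneg _)
      exact pow_eq_zero_iff (two_ne_zero) |>.1 this
    have : esy s x l = 0 := by
      refine Finset.sum_eq_zero fun S hS => ?_
      obtain ⟨hSs, hSc⟩ := Finset.mem_powersetCard.1 hS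
      obtain ⟨i, hi⟩ := Finset.card_pos.1 (hSc ▸ hl0)
      exact Finset.prod_eq_zero hi (hx0 i (hSs hi))
    rw [this, abs_zero, zero_mul]
    positivity
  · have hc0' : 0 < c := hc0.lt_of_ne (by rintro rfl; simp at hcc)
    have hc1' : c < 1 := hc1.lt_of_ne (by rintro rfl; simp at hcc)
    set n := s.card with hn_def
    set d := c * (1 - c) with hd
    -- These radii make the exponent in each of the two Cauchy bounds at most `l`.
    have h1 := esy_sq_mul_pow_le s x hx hl (r := 30 * l / (n * d)) (by positivity)
    have h2 := kraw_sq_mul_pow_le hl hc0' hc1' (r := l * d / n) (by positivity)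
    have h1' : esy s x l ^ 2 * (30 * l / (n * d)) ^ l ≤ Real.exp l := by
      refine h1.trans (Real.exp_le_exp.2 ?_)
      calc _ ≤ 30 * l / (n * d) * (n * d / 30) := by gcongr
        _ = l := by field_simp
    have h2' : (n.choose l * l1 (kraw n c l)) ^ 2 * (l * d / n) ^ l ≤ Real.exp l := by
      refine h2.trans (Real.exp_le_exp.2 (le_of_eq ?_))
      rw [← hd]; field_simp
    have h3 : (n : ℝ) ^ l ≤ n.choose l * (l : ℝ) ^ l := by
      exact_mod_cast pow_le_choose_mul_pow l n hl
    have h4 : 1 ≤ n.choose l * ((l : ℝ) / n) ^ l := by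
      rw [div_pow, ← mul_div_assoc, one_le_div (by positivity)]
      exact h3
    set A := |esy s x l| with hA
    set B := l1 (kraw n c l) with hB
    have hB0 : 0 ≤ B := l1_nonneg _
    rw [← sq_abs] at h1'
    have h5 := mul_le_mul h1' h2' (by positivity) (by positivity)
    have h6 : (A * B) ^ 2 * 30 ^ l ≤ Real.exp 2 ^ l := by
      calc (A * B) ^ 2 * 30 ^ l ≤ (A * B) ^ 2 * 30 ^ l * (n.choose l * ((l : ℝ) / n) ^ l) ^ 2 :=
            le_mul_of_one_le_right (by positivity) (one_le_pow₀ h4)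
        _ = A ^ 2 * (30 * l / (n * d)) ^ l * ((n.choose l * B) ^ 2 * (l * d / n) ^ l) := by
            have : (30 : ℝ) ^ l * (((l : ℝ) / n) ^ l) ^ 2 =
                (30 * l / (n * d)) ^ l * (l * d / n) ^ l := by
              rw [← pow_mul, mul_comm l 2, pow_mul, ← mul_pow, ← mul_pow]
              congr 1
              field_simp
            linear_combination (A * B) ^ 2 * (n.choose l : ℝ) ^ 2 * this
        _ ≤ Real.exp l * Real.exp l := h5
        _ = Real.exp 2 ^ l := by
            rw [← Real.exp_add, ← Real.exp_nat_mul]; congr 1; ring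
    have he : Real.exp 2 ≤ 30 / 4 := by
      have : Real.exp 2 = Real.exp 1 ^ 2 := by rw [← Real.exp_nat_mul]; norm_num
      rw [this]
      nlinarith [Real.exp_one_lt_d9, Real.exp_pos 1]
    have h7 : (A * B) ^ 2 * 30 ^ l ≤ ((1 / 2 : ℝ) ^ l) ^ 2 * 30 ^ l := by
      refine h6.trans ((pow_le_pow_left₀ (Real.exp_pos _).le he l).trans (le_of_eq ?_))
      rw [← pow_mul, mul_comm l 2, pow_mul, ← mul_pow]
      norm_num
    exact le_of_sq_le_sq (le_of_mul_le_mul_right h7 (by positivity)) (by positivity)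

/-! ### Approximation of one group of nearby parameters -/

/-- The probability generating function of the sum of independent Bernoulli variables with means
`p i`, `i ∈ s`. -/
noncomputable def pgf {ι : Type*} (s : Finset ι) (p : ι → ℝ) : ℝ[X] :=
  ∏ i ∈ s, (1 + C (p i) * (X - 1))

theorem l1_pgf_le_one {ι : Type*} (s : Finset ι) (p : ι → ℝ)
    (hp : ∀ i ∈ s, p i ∈ Set.Icc (0 : ℝ) 1) : l1 (pgf s p) ≤ 1 := by
  refine l1_prod_le_one _ _ fun i hi => ?_
  have h : (1 + C (p i) * (X - 1) : ℝ[X]) = C (p i) * X + C (1 - p i) := by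
    simp only [map_sub, map_one]; ring
  rw [h, l1_eq_sum_range _ (N := 2) (Nat.lt_succ_of_le natDegree_linear_le)]
  simp only [Finset.sum_range_succ, Finset.sum_range_zero, coeff_add, coeff_C_mul, coeff_X_zero,
    coeff_C_zero, coeff_X_one, coeff_C_of_ne_zero one_ne_zero, mul_zero, mul_one, zero_add, add_zero]
  rw [abs_of_nonneg (hp i hi).1, abs_of_nonneg (sub_nonneg.2 (hp i hi).2)]
  linarith

/-- Expansion of a Poisson binomial law around the binomial law with parameter `c`. -/
theorem pgf_eq_sum {ι : Type*} (s : Finset ι) (p : ι → ℝ) (c : ℝ) :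
    pgf s p = ∑ l ∈ Finset.range (s.card + 1),
      C (esy s (fun i => p i - c) l) * kraw s.card c l := by
  have h := prod_add_mul_eq_sum_esy s (fun i => C (p i - c)) (1 + C c * (X - 1)) (X - 1)
  simp only [esy_map C] at h
  rw [pgf]
  simp only [kraw]
  rw [← h]
  refine Finset.prod_congr rfl fun i _ => ?_
  rw [map_sub]; ring

/-- The scatter of parameters in a short interval is at most `s.card * (b - c) * (c - a)` (the
Bhatia–Davis inequality), and `(b - c) * (c - a) ≤ 2 * (b - a) * c * (1 - c)` inside `[0, 1]`. -/
theorem sum_sq_le_of_mem_Icc {ι : Type*} (s : Finset ι) (p : ι → ℝ) {a b c : ℝ} (ha : 0 ≤ a)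
    (hb : b ≤ 1) (hab : b - a ≤ 1 / 60) (hp : ∀ i ∈ s, p i ∈ Set.Icc a b)
    (hc : c ∈ Set.Icc a b) (hmean : ∑ i ∈ s, (p i - c) = 0) :
    ∑ i ∈ s, (p i - c) ^ 2 ≤ s.card * (c * (1 - c)) / 30 := by
  have h1 : ∑ i ∈ s, (p i - c) ^ 2 ≤ ∑ i ∈ s, ((b - c) * (c - a) + (a + b - 2 * c) * (p i - c)) :=
    Finset.sum_le_sum fun i hi => by
      nlinarith [mul_nonneg (sub_nonneg.2 (hp i hi).1) (sub_nonneg.2 (hp i hi).2)]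
  rw [Finset.sum_add_distrib, ← Finset.mul_sum s _ (a + b - 2 * c), hmean, mul_zero, add_zero,
    Finset.sum_const,
    nsmul_eq_mul] at h1
  obtain ⟨hca, hcb⟩ := hc
  have h2 : (b - c) * (c - a) ≤ c * (1 - c) / 30 := by
    rcases le_total c (1 / 2) with h | h
    · have h3 : (b - c) * (c - a) ≤ 1 / 60 * c :=
        mul_le_mul (by linarith) (by linarith) (by linarith) (by norm_num)
      nlinarith
    · have h3 : (b - c) * (c - a) ≤ (1 - c) * (1 / 60) :=
        mul_le_mul (by linarith) (by linarith) (by linarith) (by linarith)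
      nlinarith
  calc _ ≤ _ := h1
    _ ≤ s.card * (c * (1 - c) / 30) := by gcongr
    _ = _ := by ring

/-- Parameters in an interval of length `1 / 60` may be replaced by at most `k + 2` distinct values,
changing the generating function by at most `2 * 2⁻ᵏ`: matching the first `k` elementary symmetric
polynomials kills the terms of order at most `k` in the binomial expansion. -/
theorem exists_few_values_close {ι : Type*} [Fintype ι] (s : Finset ι) (p : ι → ℝ) {a b : ℝ}
    (ha : 0 ≤ a) (hab' : a ≤ b) (hb : b ≤ 1) (hab : b - a ≤ 1 / 60)
    (hp : ∀ i ∈ s, p i ∈ Set.Icc a b) {k : ℕ} (hk : 1 ≤ k) :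
    ∃ q : ι → ℝ, (∀ i ∈ s, q i ∈ Set.Icc a b) ∧ (s.image q).card ≤ k + 2 ∧
      l1 (pgf s p - pgf s q) ≤ 2 * (1 / 2) ^ k := by
  rcases s.eq_empty_or_nonempty with rfl | hs
  · exact ⟨p, by simp, by simp, by simp [l1_zero]⟩
  have hn : (0 : ℝ) < s.card := by exact_mod_cast hs.card_pos
  set c : ℝ := (∑ i ∈ s, p i) / s.card with hc
  have hcI : c ∈ Set.Icc a b := by
    constructor
    · rw [hc, le_div_iff₀ hn, mul_comm, ← nsmul_eq_mul]
      exact Finset.card_nsmul_le_sum _ _ _ fun i hi => (hp i hi).1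
    · rw [hc, div_le_iff₀ hn, mul_comm, ← nsmul_eq_mul]
      exact Finset.sum_le_card_nsmul _ _ _ fun i hi => (hp i hi).2
  obtain ⟨y, hyI, hy, hcard⟩ := exists_few_values s (fun i => p i - c) (a := a - c) (b := b - c)
    (by linarith) (fun i hi => ⟨by linarith [(hp i hi).1], by linarith [(hp i hi).2]⟩) k
  have hqI : ∀ i ∈ s, y i + c ∈ Set.Icc a b := fun i hi =>
    ⟨by linarith [(hyI i hi).1], by linarith [(hyI i hi).2]⟩
  have hmp : ∑ i ∈ s, (p i - c) = 0 := by
    rw [Finset.sum_sub_distrib, Finset.sum_const, nsmul_eq_mul, hc]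
    field_simp
    ring
  have hyc : (fun i => y i + c - c) = y := by funext i; ring
  have hmq : ∑ i ∈ s, (y i + c - c) = 0 := by
    have := hy 1 hk
    rw [esy_one, esy_one, hmp] at this
    simpa using this
  have hVp := sum_sq_le_of_mem_Icc s p ha hb hab hp hcI hmp
  have hVq := sum_sq_le_of_mem_Icc s (fun i => y i + c) ha hb hab hqI hcI hmq
  refine ⟨fun i => y i + c, hqI, ?_, ?_⟩
  · have : s.image (fun i => y i + c) = (s.image y).image (· + c) := by
      rw [Finset.image_image]; rfl
    rw [this]
    exact Finset.card_image_le.trans hcard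
  · have hc0 : 0 ≤ c := ha.trans hcI.1
    have hc1 : c ≤ 1 := hcI.2.trans hb
    rw [pgf_eq_sum s p c, pgf_eq_sum s (fun i => y i + c) c, ← Finset.sum_sub_distrib]
    refine (l1_sum_le _ _).trans ?_
    have hterm : ∀ l ∈ Finset.range (s.card + 1),
        l1 (C (esy s (fun i => p i - c) l) * kraw s.card c l -
          C (esy s (fun i => y i + c - c) l) * kraw s.card c l) ≤
        if l ≤ k then 0 else 2 * (1 / 2) ^ l := by
      intro l hl
      rw [← sub_mul, ← C_sub, l1_C_mul]
      split_ifs with hlk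
      · rw [hyc, hy l hlk, sub_self, abs_zero, zero_mul]
      · have hl' : l ≤ s.card := by simpa [Nat.lt_succ_iff] using hl
        have h1 := esy_mul_kraw_le s (fun i => p i - c) hmp hc0 hc1 hVp (l := l) (by omega) hl'
        have h2 := esy_mul_kraw_le s (fun i => y i + c - c) hmq hc0 hc1 hVq (l := l)
          (by omega) hl'
        have h3 := mul_le_mul_of_nonneg_right
          (abs_sub (esy s (fun i => p i - c) l) (esy s (fun i => y i + c - c) l))
          (l1_nonneg (kraw s.card c l))
        linarith
    refine (Finset.sum_le_sum hterm).trans ?_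
    -- Tail of the geometric series, in a form suited to induction on the number of terms.
    have hgeo : ∀ N : ℕ, ∑ l ∈ Finset.range N, (if l ≤ k then (0 : ℝ) else 2 * (1 / 2) ^ l) ≤
        if N ≤ k + 1 then 0 else 2 * (1 / 2) ^ k - 2 * (1 / 2) ^ (N - 1) := by
      intro N
      induction N with
      | zero => simp
      | succ N ih =>
        rw [Finset.sum_range_succ]
        rcases lt_trichotomy N (k + 1) with h | h | h
        · rw [if_pos (show N ≤ k by omega), if_pos (show N + 1 ≤ k + 1 by omega)]
          rw [if_pos h.le] at ih
          linarith
        · subst h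
          simp only [le_refl, if_true] at ih
          rw [if_neg (by omega), if_neg (by omega), Nat.add_sub_cancel]
          have : (1 / 2 : ℝ) ^ (k + 1) = (1 / 2) ^ k / 2 := by rw [pow_succ]; ring
          rw [this]
          linarith
        · obtain ⟨M, rfl⟩ : ∃ M, N = M + 1 := ⟨N - 1, by omega⟩
          rw [if_neg (by omega), if_neg (by omega), Nat.add_sub_cancel]
          rw [if_neg (by omega), Nat.add_sub_cancel] at ih
          have : (1 / 2 : ℝ) ^ (M + 1) = (1 / 2) ^ M / 2 := by rw [pow_succ]; ring
          rw [this]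
          linarith
    refine (hgeo _).trans ?_
    split_ifs
    · positivity
    · linarith [show (0 : ℝ) ≤ 2 * (1 / 2) ^ (s.card + 1 - 1) by positivity]

/-! ### Total variation distance and assembly -/

theorem pbdPmf_eq_coeff {n : ℕ} (p : Fin n → ℝ) (k : ℕ) :
    pbdPmf p k = (pgf Finset.univ p).coeff k := by
  have h : pgf Finset.univ p = ∏ i, (C (p i) * X + C (1 - p i)) :=
    Finset.prod_congr rfl fun i _ => by simp only [map_sub, map_one]; ring
  rw [h, Finset.prod_add, finsetSum_coeff, pbdPmf, Finset.sum_filter]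
  refine Finset.sum_congr rfl fun S _ => ?_
  rw [Finset.prod_mul_distrib, Finset.prod_const, ← map_prod, ← map_prod,
    ← Finset.compl_eq_univ_sdiff, mul_right_comm, ← C_mul, coeff_C_mul_X_pow]
  simp only [eq_comm]

theorem dTV_pbdPmf_eq {n : ℕ} (p q : Fin n → ℝ) :
    dTV (pbdPmf p) (pbdPmf q) = 1 / 2 * l1 (pgf Finset.univ p - pgf Finset.univ q) := by
  rw [dTV, l1]
  congr 1
  simp only [pbdPmf_eq_coeff, ← coeff_sub]
  refine tsum_eq_sum fun j hj => ?_
  rw [notMem_support_iff.1 hj, abs_zero]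

/-- Splits the parameters among the sixty intervals `[j / 60, (j + 1) / 60]` and treats each group
separately; total variation errors add up under convolution. -/
theorem exists_close_of_param {n : ℕ} (p : Fin n → ℝ) (hp : ∀ i, p i ∈ Set.Icc (0 : ℝ) 1) {k : ℕ}
    (hk : 1 ≤ k) :
    ∃ q : Fin n → ℝ, (∀ i, q i ∈ Set.Icc (0 : ℝ) 1) ∧
      dTV (pbdPmf p) (pbdPmf q) ≤ 60 * (1 / 2) ^ k ∧
      (Finset.univ.image q).card ≤ 60 * (k + 2) := by
  -- The cap at `59` puts the parameter `1` into the last interval.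
  set g : Fin n → ℕ := fun i => min 59 ⌊60 * p i⌋₊ with hg
  have hg60 : ∀ i, g i ∈ Finset.range 60 := fun i => by
    rw [Finset.mem_range]; exact (min_le_left _ _).trans_lt (by norm_num)
  have hgI : ∀ i, p i ∈ Set.Icc ((g i : ℝ) / 60) (((g i : ℝ) + 1) / 60) := by
    intro i
    have h0 : 0 ≤ 60 * p i := by linarith [(hp i).1]
    constructor
    · rw [div_le_iff₀ (by norm_num)]
      have : (g i : ℝ) ≤ ⌊60 * p i⌋₊ := by exact_mod_cast min_le_right _ _
      linarith [Nat.floor_le h0]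
    · rw [le_div_iff₀ (by norm_num)]
      rcases min_choice 59 ⌊60 * p i⌋₊ with h | h
      · have : g i = 59 := h
        rw [this]; push_cast; linarith [(hp i).2]
      · have : g i = ⌊60 * p i⌋₊ := h
        rw [this]; linarith [Nat.lt_floor_add_one (60 * p i)]
  have hex : ∀ j ∈ Finset.range 60, ∃ q : Fin n → ℝ,
      (∀ i ∈ Finset.univ.filter (g · = j), q i ∈ Set.Icc (0 : ℝ) 1) ∧
      ((Finset.univ.filter (g · = j)).image q).card ≤ k + 2 ∧
      l1 (pgf (Finset.univ.filter (g · = j)) p - pgf (Finset.univ.filter (g · = j)) q) ≤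
        2 * (1 / 2) ^ k := by
    intro j hj
    have hj' : (j : ℝ) + 1 ≤ 60 := by exact_mod_cast Finset.mem_range.1 hj
    have hj0 : (0 : ℝ) ≤ (j : ℝ) / 60 := by positivity
    have hj1 : ((j : ℝ) + 1) / 60 ≤ 1 := by rw [div_le_one (by norm_num)]; exact hj'
    obtain ⟨q, h1, h2, h3⟩ := exists_few_values_close (Finset.univ.filter (g · = j)) p
      (a := (j : ℝ) / 60) (b := ((j : ℝ) + 1) / 60) hj0 (by linarith) hj1 (by linarith)
      (fun i hi => by
        have := hgI i
        rwa [(Finset.mem_filter.1 hi).2] at this) hk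
    exact ⟨q, fun i hi => ⟨hj0.trans (h1 i hi).1, (h1 i hi).2.trans hj1⟩, h2, h3⟩
  choose! Q hQI hQc hQl using hex
  have hfib : ∀ r : Fin n → ℝ, pgf Finset.univ r =
      ∏ j ∈ Finset.range 60, pgf (Finset.univ.filter (g · = j)) r := fun r =>
    (Finset.prod_fiberwise_of_maps_to (fun i _ => hg60 i) _).symm
  have hqQ : ∀ j, ∀ i ∈ Finset.univ.filter (g · = j), Q (g i) i = Q j i := fun j i hi => by
    rw [(Finset.mem_filter.1 hi).2]
  have hqI : ∀ i, Q (g i) i ∈ Set.Icc (0 : ℝ) 1 := fun i => hQI _ (hg60 i) i (by simp)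
  refine ⟨fun i => Q (g i) i, hqI, ?_, ?_⟩
  · rw [dTV_pbdPmf_eq, hfib p, hfib fun i => Q (g i) i]
    have h1 := l1_prod_sub_prod_le (Finset.range 60)
      (fun j => pgf (Finset.univ.filter (g · = j)) p)
      (fun j => pgf (Finset.univ.filter (g · = j)) fun i => Q (g i) i)
      (fun j _ => l1_pgf_le_one _ _ fun i _ => hp i)
      (fun j _ => l1_pgf_le_one _ _ fun i _ => hqI i)
    have h2 : ∀ j ∈ Finset.range 60, l1 (pgf (Finset.univ.filter (g · = j)) p -
        pgf (Finset.univ.filter (g · = j)) fun i => Q (g i) i) ≤ 2 * (1 / 2) ^ k := by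
      intro j hj
      have : pgf (Finset.univ.filter (g · = j)) (fun i => Q (g i) i) =
          pgf (Finset.univ.filter (g · = j)) (Q j) :=
        Finset.prod_congr rfl fun i hi => by simp only [hqQ j i hi]
      rw [this]
      exact hQl j hj
    have h3 := Finset.sum_le_card_nsmul _ _ _ h2
    rw [Finset.card_range, nsmul_eq_mul] at h3
    push_cast at h3
    linarith
  · have hsub : Finset.univ.image (fun i => Q (g i) i) ⊆
        (Finset.range 60).biUnion fun j => (Finset.univ.filter (g · = j)).image (Q j) := by
      rw [Finset.image_subset_iff]
      intro i _
      rw [Finset.mem_biUnion]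
      exact ⟨g i, hg60 i, Finset.mem_image_of_mem (Q (g i)) (by simp)⟩
    refine (Finset.card_le_card hsub).trans ((Finset.card_biUnion_le_card_mul _ _ (k + 2)
      fun j hj => hQc j hj).trans ?_)
    simp

/-- Every n-PBD is ε-close to an n-PBD with O(log(1/ε)) distinct parameters. -/
theorem few_distinct_parameters_suffice :
    ∃ C : ℝ, 1 ≤ C ∧
      ∀ n : ℕ, 0 < n → ∀ ε : ℝ, 0 < ε → ε < 1 / 2 →
        ∀ p : Fin n → ℝ, (∀ i, p i ∈ Set.Icc (0 : ℝ) 1) →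
          ∃ q : Fin n → ℝ, (∀ i, q i ∈ Set.Icc (0 : ℝ) 1) ∧
            dTV (pbdPmf p) (pbdPmf q) ≤ ε ∧
            ((Finset.univ.image q).card : ℝ) ≤ C * Real.log (1 / ε) := by
  refine ⟨1200, by norm_num, fun n _ ε hε hε2 p hp => ?_⟩
  set L := Real.log (1 / ε) with hL
  have hlog2 := Real.log_two_gt_d9
  have hL2 : Real.log 2 ≤ L := Real.log_le_log (by norm_num) (by
    rw [le_div_iff₀ hε]; linarith)
  -- `2 ^ (-m) ≤ ε` since `2 * log 2 ≥ 1`, and the extra `6` absorbs the factor `60 ≤ 2 ^ 6`.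
  set m := ⌈2 * L⌉₊ with hm
  obtain ⟨q, hqI, hd, hc⟩ := exists_close_of_param p hp (k := m + 6) (by omega)
  have hmL : 2 * L ≤ m := Nat.le_ceil _
  have hmU : (m : ℝ) < 2 * L + 1 := Nat.ceil_lt_add_one (by linarith)
  refine ⟨q, hqI, hd.trans ?_, ?_⟩
  · have h1 : (1 / 2 : ℝ) ^ m ≤ ε := by
      have h2 : (1 / 2 : ℝ) ^ m = Real.exp (-(m * Real.log 2)) := by
        rw [Real.exp_neg, Real.exp_nat_mul, Real.exp_log (by norm_num), one_div, inv_pow]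
      have h3 : ε = Real.exp (-L) := by
        rw [hL, one_div, Real.log_inv, neg_neg, Real.exp_log hε]
      rw [h2, h3]
      refine Real.exp_le_exp.2 (neg_le_neg ?_)
      nlinarith
    rw [pow_add]
    nlinarith
  · have hc' : ((Finset.univ.image q).card : ℝ) ≤ 60 * ((m : ℝ) + 6 + 2) := by exact_mod_cast hc
    linarith
end

section
/- Let F₀, F₁, …, F_m be symmetric polynomials in n real variables (each invariant under every permutation of the variables), and let K = {x ∈ ℝⁿ : F_j(x) ≥ 0 for all 1 ≤ j ≤ m}. Let k = max{2, ⌈deg(F₀)/2⌉, deg(F₁), …, deg(F_m)}. If F₀ attains its minimum value over K at some point of K, then there exists a point y ∈ K with at most k distinct coordinate values such that F₀(y) = min_{x ∈ K} F₀(x). -/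
/-!
Write `E x = (e₁(x), …, eₙ(x))` for the elementary symmetric functions of `x`. A symmetric
polynomial of degree `d` is a combination of monomials in the `eᵢ` of weight at most `d`, where `eᵢ`
has weight `i` (`exists_esymm_expansion`). Hence, once `e₁, …, e_k` are fixed, a symmetric
polynomial of degree at most `k` is constant (`eval_eq_of_degree_le`), and one of degree at most
`2k` is an affine function of `(e_{k+1}, …, eₙ)`: a monomial of weight at most `2k` contains at most
one variable of weight above `k` (`eval_add_eval_of_degree_le`).

Let `D` be the set of points with the same `e₁, …, e_k` as the given minimizer `x₀`. It is contained
in `K`, and it is compact because `∑ xᵢ²` is constant on it; this uses `2 ≤ k`. Among the minimizers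
of `F 0` in `D`, choose `y` with `∑ eᵢ(y)²` maximal. If `y` had more than `k` distinct coordinates,
then `∏ (X - yᵢ) = p * q`, where `p` has degree `k + 1` and simple real roots. For small `ε`, the
polynomials `p ± ε` still have only real roots (`exists_prod_eq_add_C`), so `(p ± ε) * q` are
`∏ (X - y±ᵢ)` for points `y±` with `E y± = E y ± w`, where `w ≠ 0` vanishes in the first `k`
entries. By affinity both `y±` are minimizers of `F 0`, and by strict convexity one of them has a
larger `∑ eᵢ²` than `y`, a contradiction.
-/

/-! ### Symmetric polynomials in terms of elementary symmetric functions -/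

open MvPolynomial in
/-- The vector `(e₁(x), …, eₙ(x))` of elementary symmetric functions; the entry with index `i` is
`e_{i+1}(x)`. -/
noncomputable def esymmVec {n : ℕ} (x : Fin n → ℝ) (i : Fin n) : ℝ :=
  eval x (esymm (Fin n) ℝ (i + 1))

open MvPolynomial in
theorem esymm_monomial_isHomogeneous {n : ℕ} (s : Fin n →₀ ℕ) (c : ℝ) :
    (C c * ∏ i : Fin n, esymm (Fin n) ℝ (i + 1) ^ s i).IsHomogeneous
      (∑ i : Fin n, ((i : ℕ) + 1) * s i) := by
  refine IsHomogeneous.C_mul (IsHomogeneous.prod _ _ _ fun i _ => IsHomogeneous.pow ?_ _) c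
  unfold esymm
  refine IsHomogeneous.sum _ _ _ fun t ht => ?_
  have := IsHomogeneous.prod t (fun i => (X i : MvPolynomial (Fin n) ℝ)) (fun _ => 1)
    (fun i _ => isHomogeneous_X ℝ i)
  simpa [(Finset.mem_powersetCard.1 ht).2] using this

open MvPolynomial in
/-- The fundamental theorem of symmetric polynomials with a weight bound: the monomials in the
elementary symmetric functions have weight at most `deg F`. Monomials of larger weight can be
dropped because they only contribute to homogeneous components of `F` above its degree. -/
theorem exists_esymm_expansion {n : ℕ} {F : MvPolynomial (Fin n) ℝ} (hF : F.IsSymmetric) :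
    ∃ (T : Finset (Fin n →₀ ℕ)) (c : (Fin n →₀ ℕ) → ℝ),
      (∀ s ∈ T, ∑ i : Fin n, ((i : ℕ) + 1) * s i ≤ F.totalDegree) ∧
      ∀ x, eval x F = ∑ s ∈ T, c s * ∏ i, esymmVec x i ^ s i := by
  classical
  obtain ⟨G, hG⟩ := esymmAlgHom_surjective (R := ℝ) (σ := Fin n) (n := n) (by simp) ⟨F, hF⟩
  have hG' : F = ∑ s ∈ G.support,
      C (coeff s G) * ∏ i : Fin n, esymm (Fin n) ℝ (i + 1) ^ s i := by
    have := congrArg Subtype.val hG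
    rw [esymmAlgHom_apply, aeval_def, eval₂_eq'] at this
    exact this.symm
  refine ⟨G.support.filter fun s => ∑ i : Fin n, ((i : ℕ) + 1) * s i ≤ F.totalDegree,
    fun s => coeff s G, fun s hs => (Finset.mem_filter.1 hs).2, fun x => ?_⟩
  have key : F = ∑ s ∈ G.support.filter
      (fun s => ∑ i : Fin n, ((i : ℕ) + 1) * s i ≤ F.totalDegree),
      C (coeff s G) * ∏ i : Fin n, esymm (Fin n) ℝ (i + 1) ^ s i := by
    conv_lhs => rw [← sum_homogeneousComponent F]
    have h1 : ∀ j, homogeneousComponent j F = ∑ s ∈ G.support,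
        if ∑ i : Fin n, ((i : ℕ) + 1) * s i = j then
          C (coeff s G) * ∏ i : Fin n, esymm (Fin n) ℝ (i + 1) ^ s i else 0 := by
      intro j
      conv_lhs => rw [hG']
      rw [map_sum]
      refine Finset.sum_congr rfl fun s _ => ?_
      rw [homogeneousComponent_of_mem (esymm_monomial_isHomogeneous s (coeff s G))]
      simp only [eq_comm]
    simp_rw [h1]
    rw [Finset.sum_comm, Finset.sum_filter]
    refine Finset.sum_congr rfl fun s _ => ?_
    rw [Finset.sum_ite_eq]
    simp
  conv_lhs => rw [key]
  simp [esymmVec, map_sum, map_prod]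

theorem eval_eq_of_degree_le {n k : ℕ} {F : MvPolynomial (Fin n) ℝ} (hF : F.IsSymmetric)
    (hd : F.totalDegree ≤ k) {x y : Fin n → ℝ}
    (h : ∀ i : Fin n, (i : ℕ) < k → esymmVec x i = esymmVec y i) :
    MvPolynomial.eval x F = MvPolynomial.eval y F := by
  obtain ⟨T, c, hT, hc⟩ := exists_esymm_expansion hF
  rw [hc, hc]
  refine Finset.sum_congr rfl fun s hs => ?_
  congr 1
  refine Finset.prod_congr rfl fun i _ => ?_
  by_cases hi : (i : ℕ) < k
  · rw [h i hi]
  · have h1 : ((i : ℕ) + 1) * s i ≤ k :=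
      (Finset.single_le_sum (f := fun i : Fin n => ((i : ℕ) + 1) * s i)
        (fun _ _ => Nat.zero_le _) (Finset.mem_univ i)).trans ((hT s hs).trans hd)
    have : s i = 0 := by
      by_contra h0
      have : 1 ≤ s i := Nat.one_le_iff_ne_zero.2 h0
      nlinarith
    simp [this]

/-- A monomial of weight at most `2k` is affine along directions supported on the variables of
weight greater than `k`. -/
theorem prod_pow_add_sub {n k : ℕ} (s : Fin n →₀ ℕ)
    (hs : ∑ i : Fin n, ((i : ℕ) + 1) * s i ≤ 2 * k) (z w : Fin n → ℝ)
    (hw : ∀ i : Fin n, (i : ℕ) < k → w i = 0) :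
    ∏ i, (z i + w i) ^ s i + ∏ i, (z i - w i) ^ s i = 2 * ∏ i, z i ^ s i := by
  classical
  by_cases h : ∀ i : Fin n, k ≤ (i : ℕ) → s i = 0
  · have h1 : ∀ v : Fin n → ℝ, (∀ i : Fin n, (i : ℕ) < k → v i = z i) →
        ∏ i, v i ^ s i = ∏ i, z i ^ s i := by
      intro v hv
      refine Finset.prod_congr rfl fun i _ => ?_
      by_cases hi : (i : ℕ) < k
      · rw [hv i hi]
      · simp [h i (not_lt.1 hi)]
    rw [h1 (fun i => z i + w i) (fun i hi => by simp [hw i hi]),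
      h1 (fun i => z i - w i) (fun i hi => by simp [hw i hi])]
    ring
  · push Not at h
    obtain ⟨a, hka, ha⟩ := h
    have ha1 : 1 ≤ s a := Nat.one_le_iff_ne_zero.2 ha
    rw [← Finset.add_sum_erase _ _ (Finset.mem_univ a)] at hs
    have hsa : s a = 1 := by
      by_contra h2
      have : 2 ≤ s a := by omega
      have : (k + 1) * 2 ≤ ((a : ℕ) + 1) * s a := Nat.mul_le_mul (by omega) this
      omega
    have hoth : ∀ i ∈ Finset.univ.erase a, k ≤ (i : ℕ) → s i = 0 := by
      intro i hi hki
      by_contra h0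
      have h1 : 1 ≤ s i := Nat.one_le_iff_ne_zero.2 h0
      have h2 := Finset.single_le_sum (f := fun i : Fin n => ((i : ℕ) + 1) * s i)
        (fun _ _ => Nat.zero_le _) hi
      have h3 : (k + 1) * 1 ≤ ((i : ℕ) + 1) * s i := Nat.mul_le_mul (by omega) h1
      simp only [hsa] at hs
      omega
    have h1 : ∀ v : Fin n → ℝ, (∀ i : Fin n, (i : ℕ) < k → v i = z i) →
        ∏ i, v i ^ s i = v a * ∏ i ∈ Finset.univ.erase a, z i ^ s i := by
      intro v hv
      rw [← Finset.mul_prod_erase _ _ (Finset.mem_univ a), hsa, pow_one]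
      congr 1
      refine Finset.prod_congr rfl fun i hi => ?_
      by_cases hik : (i : ℕ) < k
      · rw [hv i hik]
      · simp [hoth i hi (not_lt.1 hik)]
    rw [h1 (fun i => z i + w i) (fun i hi => by simp [hw i hi]),
      h1 (fun i => z i - w i) (fun i hi => by simp [hw i hi]), h1 z (fun _ _ => rfl)]
    ring

theorem eval_add_eval_of_degree_le {n k : ℕ} {F : MvPolynomial (Fin n) ℝ} (hF : F.IsSymmetric)
    (hd : F.totalDegree ≤ 2 * k) {y u v w : Fin n → ℝ}
    (hw : ∀ i : Fin n, (i : ℕ) < k → w i = 0)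
    (hu : ∀ i, esymmVec u i = esymmVec y i + w i) (hv : ∀ i, esymmVec v i = esymmVec y i - w i) :
    MvPolynomial.eval u F + MvPolynomial.eval v F = 2 * MvPolynomial.eval y F := by
  obtain ⟨T, c, hT, hc⟩ := exists_esymm_expansion hF
  rw [hc, hc, hc, ← Finset.sum_add_distrib, Finset.mul_sum]
  refine Finset.sum_congr rfl fun s hs => ?_
  have := prod_pow_add_sub s ((hT s hs).trans hd) (esymmVec y) w hw
  simp_rw [hu, hv]
  linear_combination c s * this

/-! ### Perturbing a point with many distinct coordinates -/

open Polynomial Filter Topology in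
/-- A real polynomial with simple real roots keeps real roots only under a small change of its
constant term: near each root it is a local homeomorphism, so roots persist in disjoint
neighbourhoods. -/
theorem exists_prod_eq_add_C {n : ℕ} (S : Finset (Fin n)) (hS : S.Nonempty) (y : Fin n → ℝ)
    (hy : Set.InjOn y S) :
    ∀ᶠ c in 𝓝 (0 : ℝ), ∃ u : Fin n → ℝ,
      ∏ i ∈ S, (X - C (u i)) = ∏ i ∈ S, (X - C (y i)) + C c := by
  classical
  set p : ℝ[X] := ∏ i ∈ S, (X - C (y i)) with hp
  obtain ⟨U, hU, hdisj⟩ := (S.image y).finite_toSet.t2_separation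
  have hroot : ∀ i ∈ S, p.eval (y i) = 0 := by
    intro i hi
    rw [hp, eval_prod]
    exact Finset.prod_eq_zero hi (by simp)
  have hder : ∀ i ∈ S, p.derivative.eval (y i) ≠ 0 := by
    intro i hi
    have h1 : p = (X - C (y i)) * ∏ j ∈ S.erase i, (X - C (y j)) :=
      (Finset.mul_prod_erase S _ hi).symm
    rw [h1, derivative_mul]
    simp only [derivative_X_sub_C, one_mul, eval_add, eval_mul, eval_sub, eval_X, eval_C, sub_self,
      zero_mul, add_zero, eval_prod]
    refine Finset.prod_ne_zero_iff.2 fun j hj => sub_ne_zero.2 fun h => ?_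
    exact (Finset.mem_erase.1 hj).1 (hy (Finset.mem_erase.1 hj).2 hi h.symm)
  have hnear : ∀ i ∈ S, ∀ᶠ c in 𝓝 (0 : ℝ), ∃ u ∈ U (y i), p.eval u = -c := by
    intro i hi
    have hmap := (p.hasStrictDerivAt (y i)).map_nhds_eq (hder i hi)
    rw [hroot i hi] at hmap
    have h1 : (fun x => p.eval x) '' U (y i) ∈ 𝓝 (0 : ℝ) := by
      rw [← hmap]
      exact image_mem_map ((hU (y i)).2.mem_nhds (hU (y i)).1)
    have h2 : Tendsto (fun c : ℝ => -c) (𝓝 0) (𝓝 0) := by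
      simpa using (continuous_neg (G := ℝ)).tendsto 0
    filter_upwards [h2 h1] with c hc
    exact hc
  filter_upwards [(Filter.eventually_all_finset S).2 hnear] with c hc
  choose! u hu hpu using hc
  refine ⟨u, ?_⟩
  have huinj : Set.InjOn u S := by
    intro i hi j hj hij
    by_contra hne
    have hd := hdisj (Finset.mem_coe.2 (Finset.mem_image_of_mem y hi))
      (Finset.mem_coe.2 (Finset.mem_image_of_mem y hj)) (fun h => hne (hy hi hj h))
    exact Set.disjoint_left.1 hd (hu i hi) (hij ▸ hu j hj)
  have hdegP : ∀ v : Fin n → ℝ, (∏ i ∈ S, (X - C (v i))).degree = (S.card : WithBot ℕ) := by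
    intro v
    rw [degree_prod]
    simp
  have hcard : (0 : WithBot ℕ) < (S.card : WithBot ℕ) := by exact_mod_cast hS.card_pos
  have hCdeg : (C c : ℝ[X]).degree < p.degree := by
    rw [hp, hdegP y]
    exact degree_C_le.trans_lt hcard
  refine eq_of_degree_sub_lt_of_eval_index_eq S huinj ?_ ?_
  · rw [← hdegP u]
    refine degree_sub_lt_left ?_ ?_ ?_
    · rw [degree_add_eq_left_of_degree_lt hCdeg, hp, hdegP, hdegP]
    · exact (monic_prod_of_monic _ _ fun i _ => monic_X_sub_C _).ne_zero
    · rw [(monic_prod_of_monic _ _ fun i _ => monic_X_sub_C _).leadingCoeff,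
        leadingCoeff_add_of_degree_lt' hCdeg, hp,
        (monic_prod_of_monic _ _ fun i _ => monic_X_sub_C _).leadingCoeff]
  · intro i hi
    rw [eval_add, hpu i hi, eval_prod, Finset.prod_eq_zero hi (by simp)]
    simp

open Polynomial in
theorem esymmVec_eq_coeff {n : ℕ} (x : Fin n → ℝ) (i : Fin n) :
    esymmVec x i = (-1) ^ ((i : ℕ) + 1) * (∏ j, (X - C (x j))).coeff (n - 1 - i) := by
  have hi := i.2
  have h := Multiset.prod_X_sub_C_coeff (Finset.univ.val.map x) (k := n - 1 - i)
    (by simp; omega)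
  rw [Multiset.map_map] at h
  have h2 : n - (n - 1 - (i : ℕ)) = i + 1 := by omega
  simp only [Multiset.card_map, Finset.card_val, Finset.card_univ, Fintype.card_fin, h2] at h
  have h3 : (∏ j, (X - C (x j))).coeff (n - 1 - i) =
      (-1) ^ ((i : ℕ) + 1) * (Finset.univ.val.map x).esymm (i + 1) := h
  rw [h3, ← mul_assoc, ← mul_pow, esymmVec,
    ← MvPolynomial.aeval_esymm_eq_multiset_esymm (Fin n) ℝ, MvPolynomial.aeval_eq_eval]
  simp

open Polynomial in
/-- If `y` has more than `k` distinct coordinates, then `esymmVec y` is the midpoint of a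
nondegenerate segment, in a direction not changing `e₁, …, e_k`, whose endpoints are again values
of `esymmVec`. -/
theorem exists_perturbation {n k : ℕ} (y : Fin n → ℝ) (hy : k < (Finset.univ.image y).card) :
    ∃ u v w : Fin n → ℝ, (∀ i : Fin n, (i : ℕ) < k → w i = 0) ∧ (∃ i, w i ≠ 0) ∧
      (∀ i, esymmVec u i = esymmVec y i + w i) ∧ (∀ i, esymmVec v i = esymmVec y i - w i) := by
  classical
  obtain ⟨B, hB, hBc⟩ := Finset.exists_subset_card_eq (Nat.succ_le_of_lt hy)
  obtain ⟨S, -, hSi, hSB⟩ : ∃ S : Finset (Fin n), ↑S ⊆ (Set.univ : Set (Fin n)) ∧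
      Set.InjOn y S ∧ S.image y = B :=
    Finset.exists_subset_injOn_image_eq_of_surjOn _ _ fun b hb => by simpa using hB hb
  have hScard : S.card = k + 1 := by
    rw [← Finset.card_image_of_injOn hSi, hSB, hBc]
  have hkn : k + 1 ≤ n := by simpa [hScard] using Finset.card_le_univ S
  have hev := exists_prod_eq_add_C S (Finset.card_pos.1 (by omega)) y hSi
  obtain ⟨δ, hδ, hball⟩ := Metric.eventually_nhds_iff.1 hev
  set ε := δ / 2 with hε
  have hε0 : 0 < ε := by positivity
  obtain ⟨a, ha⟩ := hball (y := ε) (by rw [Real.dist_0_eq_abs, abs_of_pos hε0]; linarith)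
  obtain ⟨b, hb⟩ := hball (y := -ε) (by rw [Real.dist_0_eq_abs, abs_neg, abs_of_pos hε0]; linarith)
  set q : ℝ[X] := ∏ i ∈ Sᶜ, (X - C (y i)) with hq
  have hqdeg : q.natDegree = n - (k + 1) := by
    rw [hq, natDegree_prod_of_monic _ _ fun i _ => monic_X_sub_C _]
    simp [Finset.card_compl, hScard]
  have hqm : q.Monic := monic_prod_of_monic _ _ fun i _ => monic_X_sub_C _
  -- Replacing `y` by `a` on `S` adds `c * q` to `∏ (X - yᵢ)`.
  have hmain : ∀ (a : Fin n → ℝ) (c : ℝ),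
      ∏ i ∈ S, (X - C (a i)) = ∏ i ∈ S, (X - C (y i)) + C c →
      ∏ i, (X - C (S.piecewise a y i)) = ∏ i, (X - C (y i)) + C c * q := by
    intro a c h
    have e1 : ∏ i ∈ S, (X - C (S.piecewise a y i)) = ∏ i ∈ S, (X - C (a i)) :=
      Finset.prod_congr rfl fun i hi => by rw [Finset.piecewise_eq_of_mem _ _ _ hi]
    have e2 : ∏ i ∈ Sᶜ, (X - C (S.piecewise a y i)) = q :=
      Finset.prod_congr rfl fun i hi => by
        rw [Finset.piecewise_eq_of_notMem _ _ _ (Finset.mem_compl.1 hi)]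
    rw [← Finset.prod_mul_prod_compl S, e1, e2, h,
      ← Finset.prod_mul_prod_compl S fun i => X - C (y i)]
    ring
  refine ⟨S.piecewise a y, S.piecewise b y,
    fun i => (-1) ^ ((i : ℕ) + 1) * (ε * q.coeff (n - 1 - i)), ?_, ⟨⟨k, by omega⟩, ?_⟩, ?_, ?_⟩
  · intro i hi
    have := i.2
    have h0 : q.coeff (n - 1 - i) = 0 := coeff_eq_zero_of_natDegree_lt (by omega)
    simp [h0]
  · have h1 : q.coeff (n - 1 - k) = 1 := by
      rw [show n - 1 - k = q.natDegree by omega]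
      exact hqm
    simp [h1, hε0.ne']
  · intro i
    rw [esymmVec_eq_coeff, esymmVec_eq_coeff, hmain a ε ha, coeff_add, coeff_C_mul]
    ring
  · intro i
    rw [esymmVec_eq_coeff, esymmVec_eq_coeff, hmain b (-ε) hb, coeff_add, coeff_C_mul]
    ring

/-! ### Minimizing on the fibers of the first elementary symmetric functions -/

theorem continuous_esymmVec {n : ℕ} (i : Fin n) : Continuous fun x : Fin n → ℝ => esymmVec x i :=
  MvPolynomial.continuous_eval _

theorem isCompact_esymm_fiber {n k : ℕ} (hk : 2 ≤ k) (x₀ : Fin n → ℝ) :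
    IsCompact {x : Fin n → ℝ | ∀ i : Fin n, (i : ℕ) < k → esymmVec x i = esymmVec x₀ i} := by
  refine Metric.isCompact_of_isClosed_isBounded ?_ ?_
  · simp only [Set.ofPred_forall]
    exact isClosed_iInter fun i => isClosed_iInter fun _ =>
      isClosed_eq (continuous_esymmVec i) continuous_const
  · -- The power sum `∑ xᵢ²` has degree `2 ≤ k`, so it is constant on this set.
    have hdeg : (MvPolynomial.psum (Fin n) ℝ 2).totalDegree ≤ k := by
      refine le_trans ?_ hk
      refine MvPolynomial.totalDegree_finsetSum_le fun i _ => ?_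
      simp [MvPolynomial.totalDegree_X_pow]
    refine (Metric.isBounded_closedBall (x := (0 : Fin n → ℝ))
      (r := ∑ i, x₀ i ^ 2 + 1)).subset fun x hx => ?_
    have h := eval_eq_of_degree_le (MvPolynomial.psum_isSymmetric (Fin n) ℝ 2) hdeg hx
    simp only [MvPolynomial.psum, map_sum, map_pow, MvPolynomial.eval_X] at h
    have h0 : 0 ≤ ∑ i, x₀ i ^ 2 := Finset.sum_nonneg fun i _ => sq_nonneg _
    rw [mem_closedBall_zero_iff, pi_norm_le_iff_of_nonneg (by linarith)]
    intro i
    have h1 : x i ^ 2 ≤ ∑ i, x i ^ 2 :=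
      Finset.single_le_sum (f := fun i => x i ^ 2) (fun i _ => sq_nonneg _) (Finset.mem_univ i)
    rw [Real.norm_eq_abs]
    nlinarith [sq_abs (x i), sq_nonneg (|x i| - 1)]

/-- Riener's theorem (Theorem 4.2 of Riener 2011): if a symmetric polynomial `F 0` attains
its minimum on a set `K` cut out by symmetric polynomial inequalities `F j ≥ 0` (1 ≤ j ≤ m),
then the minimum is attained at a point with at most `k` distinct coordinates, where
`k = max {2, ⌈deg F₀ / 2⌉, deg F₁, …, deg F_m}`. -/
theorem riener_few_distinct_coordinates (n m : ℕ)
    (F : ℕ → MvPolynomial (Fin n) ℝ)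
    (hsym : ∀ j ≤ m, (F j).IsSymmetric)
    (K : Set (Fin n → ℝ))
    (hK : K = {x : Fin n → ℝ | ∀ j : ℕ, 1 ≤ j → j ≤ m → 0 ≤ MvPolynomial.eval x (F j)})
    (k : ℕ)
    (hk : k = max 2 (max (((F 0).totalDegree + 1) / 2)
      ((Finset.Icc 1 m).sup fun j => (F j).totalDegree)))
    (x₀ : Fin n → ℝ) (hx₀ : x₀ ∈ K)
    (hmin : ∀ x ∈ K, MvPolynomial.eval x₀ (F 0) ≤ MvPolynomial.eval x (F 0)) :
    ∃ y ∈ K, (Finset.univ.image y).card ≤ k ∧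
      MvPolynomial.eval y (F 0) = MvPolynomial.eval x₀ (F 0) := by
  have hk2 : 2 ≤ k := hk ▸ le_max_left _ _
  have hk0 : (F 0).totalDegree ≤ 2 * k := by
    have : ((F 0).totalDegree + 1) / 2 ≤ k := hk ▸ (le_max_left _ _).trans (le_max_right _ _)
    omega
  have hkj : ∀ j, 1 ≤ j → j ≤ m → (F j).totalDegree ≤ k := by
    intro j h1 h2
    have : (F j).totalDegree ≤ (Finset.Icc 1 m).sup fun j => (F j).totalDegree :=
      Finset.le_sup (f := fun j => (F j).totalDegree) (Finset.mem_Icc.2 ⟨h1, h2⟩)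
    exact hk ▸ this.trans ((le_max_right _ _).trans (le_max_right _ _))
  have hsym0 := hsym 0 (Nat.zero_le _)
  set D : Set (Fin n → ℝ) :=
    {x | ∀ i : Fin n, (i : ℕ) < k → esymmVec x i = esymmVec x₀ i} with hD
  have hDK : D ⊆ K := by
    intro x hx
    rw [hK] at hx₀ ⊢
    intro j h1 h2
    rw [eval_eq_of_degree_le (hsym j h2) (hkj j h1 h2) hx]
    exact hx₀ j h1 h2
  have hM : IsCompact (D ∩ {x | MvPolynomial.eval x (F 0) = MvPolynomial.eval x₀ (F 0)}) :=
    (isCompact_esymm_fiber hk2 x₀).inter_right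
      (isClosed_eq (MvPolynomial.continuous_eval _) continuous_const)
  obtain ⟨y, ⟨hyD, hy0⟩, hymax⟩ := hM.exists_isMaxOn ⟨x₀, fun _ _ => rfl, rfl⟩
    (f := fun x => ∑ i, esymmVec x i ^ 2)
    (continuous_finsetSum _ fun i _ => (continuous_esymmVec i).pow 2).continuousOn
  refine ⟨y, hDK hyD, ?_, hy0⟩
  by_contra hcard
  obtain ⟨u, v, w, hw, ⟨i₀, hi₀⟩, hu, hv⟩ := exists_perturbation y (not_le.1 hcard)
  have huD : u ∈ D := fun i hi => by rw [hu, hw i hi, add_zero, hyD i hi]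
  have hvD : v ∈ D := fun i hi => by rw [hv, hw i hi, sub_zero, hyD i hi]
  have hsum := eval_add_eval_of_degree_le hsym0 hk0 hw hu hv
  have hu1 := hmin u (hDK huD)
  have hv1 := hmin v (hDK hvD)
  have hy1 : MvPolynomial.eval y (F 0) = MvPolynomial.eval x₀ (F 0) := hy0
  have hu2 : ∑ i, esymmVec u i ^ 2 ≤ ∑ i, esymmVec y i ^ 2 :=
    hymax ⟨huD, show MvPolynomial.eval u (F 0) = MvPolynomial.eval x₀ (F 0) by linarith⟩
  have hv2 : ∑ i, esymmVec v i ^ 2 ≤ ∑ i, esymmVec y i ^ 2 :=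
    hymax ⟨hvD, show MvPolynomial.eval v (F 0) = MvPolynomial.eval x₀ (F 0) by linarith⟩
  have hpar : ∑ i, esymmVec u i ^ 2 + ∑ i, esymmVec v i ^ 2 =
      2 * ∑ i, esymmVec y i ^ 2 + 2 * ∑ i, w i ^ 2 := by
    rw [Finset.mul_sum, Finset.mul_sum, ← Finset.sum_add_distrib, ← Finset.sum_add_distrib]
    refine Finset.sum_congr rfl fun i _ => ?_
    rw [hu, hv]
    ring
  have hwpos : 0 < ∑ i, w i ^ 2 :=
    Finset.sum_pos' (fun i _ => sq_nonneg _) ⟨i₀, Finset.mem_univ _, by positivity⟩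
  linarith
end
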